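/- Let C : ℕ → ℂ satisfy Σ_{n≥0} C(n)q^n = ∏_{k≥0} ((1 − q^{5k+1})(1 − q^{5k+4}))/((1 − q^{5k+2})(1 − q^{5k+3})) for all complex q with |q| < 1. Then, as n → ∞, C(n) is asymptotically equivalent to (2^{1/2}/5^{3/4})·cos((4π/5)(n + 3/20))·(n + 1/5)^{−3/4}·exp((4π/(5√5))·√(n + 1/5)); that is, the ratio of the two sides tends to 1. In particular, for all sufficiently large n, C(n) > 0 when n ≡ 0 or 2 (mod 5), and C(n) < 0 when n ≡ 1, 3 or 4 (mod 5). -/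

import Mathlib

open Filter Topology Complex


noncomputable def rrP (x : ℂ) : ℂ := (x - x ^ 2 - x ^ 3 + x ^ 4) / (1 - x ^ 5)

noncomputable def rrG (q : ℂ) : ℂ := -∑' n : ℕ, rrP (q ^ (n + 1)) / ((n : ℂ) + 1)

lemma rr_hs_congr {ι R : Type*} [AddCommMonoid R] [TopologicalSpace R] {f g : ι → R} {a : R} (h : HasSum f a) (e : ∀ n, g n = f n) :
    HasSum g a := (funext e : g = f) ▸ h

lemma rr_aux_prod (q : ℂ) (hq : ‖q‖ < 1) (a : ℕ) (ha : 1 ≤ a) :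
    ∃ T : ℂ, HasSum (fun k : ℕ => Complex.log (1 - q ^ (5 * k + a))) (-T) ∧
      HasSum (fun n : ℕ => (q ^ (n + 1)) ^ a / (1 - (q ^ (n + 1)) ^ 5) / ((n : ℂ) + 1)) T := by
  have h0 : 0 ≤ ‖q‖ := norm_nonneg q
  have hs : Summable (fun p : ℕ × ℕ => (q ^ (5 * p.1 + a)) ^ (p.2 + 1) / ((p.2 : ℂ) + 1)) := by
    have hg := summable_geometric_of_lt_one h0 hq
    refine Summable.of_norm_bounded (hg.mul_of_nonneg hg (fun _ => by positivity) (fun _ => by positivity)) ?_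
    rintro ⟨k, n⟩
    simp only [norm_div, norm_pow]
    rw [← pow_mul, ← pow_add]
    have h1 : (1 : ℝ) ≤ ‖((n : ℂ) + 1)‖ := by
      have : ((n : ℂ) + 1) = ((n + 1 : ℕ) : ℂ) := by push_cast; rfl
      rw [this, Complex.norm_natCast]; exact_mod_cast Nat.le_add_left 1 n
    calc ‖q‖ ^ ((5 * k + a) * (n + 1)) / ‖((n : ℂ) + 1)‖ ≤ ‖q‖ ^ ((5 * k + a) * (n + 1)) :=
          div_le_self (by positivity) h1
      _ ≤ _ := pow_le_pow_of_le_one h0 hq.le (by nlinarith [Nat.zero_le (k * n), Nat.zero_le (a * n)])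
  refine ⟨∑' p : ℕ × ℕ, (q ^ (5 * p.1 + a)) ^ (p.2 + 1) / ((p.2 : ℂ) + 1), ?_, ?_⟩
  · have := hs.hasSum.neg
    refine this.prod_fiberwise ?_
    intro k
    have hk : ‖q ^ (5 * k + a)‖ < 1 := by
      rw [norm_pow]; exact pow_lt_one₀ h0 hq (by omega)
    have := (Complex.hasSum_taylorSeries_neg_log hk).neg
    rw [neg_neg, ← hasSum_nat_add_iff' 1] at this
    simpa using this
  · have h2 := (Equiv.prodComm ℕ ℕ).hasSum_iff.mpr hs.hasSum
    refine h2.prod_fiberwise ?_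
    intro n
    have hk : ‖(q ^ (n + 1)) ^ 5‖ < 1 := by
      rw [← pow_mul, norm_pow]; exact pow_lt_one₀ h0 hq (by omega)
    have := ((hasSum_geometric_of_norm_lt_one hk).mul_left ((q ^ (n + 1)) ^ a)).div_const ((n : ℂ) + 1)
    rw [← div_eq_mul_inv] at this
    refine rr_hs_congr this (fun k => ?_)
    simp only [Function.comp, Equiv.prodComm_apply, Prod.swap, ← pow_mul, ← pow_add]
    ring_nf

lemma rr_prod (q : ℂ) (hq : ‖q‖ < 1) :
    (∏' k : ℕ, ((1 - q ^ (5 * k + 1)) * (1 - q ^ (5 * k + 4))) /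
        ((1 - q ^ (5 * k + 2)) * (1 - q ^ (5 * k + 3)))) = Complex.exp (rrG q) ∧
    Summable (fun n : ℕ => rrP (q ^ (n + 1)) / ((n : ℂ) + 1)) := by
  obtain ⟨T1, h1, g1⟩ := rr_aux_prod q hq 1 (by norm_num)
  obtain ⟨T2, h2, g2⟩ := rr_aux_prod q hq 2 (by norm_num)
  obtain ⟨T3, h3, g3⟩ := rr_aux_prod q hq 3 (by norm_num)
  obtain ⟨T4, h4, g4⟩ := rr_aux_prod q hq 4 (by norm_num)
  have hg : HasSum (fun n : ℕ => rrP (q ^ (n + 1)) / ((n : ℂ) + 1)) (T1 - T2 - T3 + T4) := by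
    refine rr_hs_congr (((g1.sub g2).sub g3).add g4) (fun n => ?_)
    simp only [rrP]
    ring
  refine ⟨?_, hg.summable⟩
  have hh := ((h1.add h4).sub (h2.add h3)).cexp
  have he : rrG q = -T1 + -T4 - (-T2 + -T3) := by
    rw [rrG, hg.tsum_eq]; ring
  rw [he, ← hh.tprod_eq]
  congr 1
  ext k
  have hne : ∀ a : ℕ, 1 ≤ a → 1 - q ^ (5 * k + a) ≠ 0 := by
    intro a ha h
    have hk : ‖q ^ (5 * k + a)‖ < 1 := by
      rw [norm_pow]; exact pow_lt_one₀ (norm_nonneg q) hq (by omega)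
    rw [← sub_eq_zero.mp h] at hk
    simp at hk
  simp only [Function.comp, Complex.exp_sub, Complex.exp_add]
  rw [Complex.exp_log (hne 1 (by norm_num)), Complex.exp_log (hne 2 (by norm_num)),
    Complex.exp_log (hne 3 (by norm_num)), Complex.exp_log (hne 4 (by norm_num))]

noncomputable def rrz : ℂ := Complex.exp (2 * Real.pi * I / 5)

lemma rrz5 : rrz ^ 5 = 1 := by
  rw [rrz, ← Complex.exp_nat_mul]
  have : ((5 : ℕ) : ℂ) * (2 * Real.pi * I / 5) = 2 * Real.pi * I := by push_cast; ring
  rw [this, Complex.exp_two_pi_mul_I]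

lemma rrz_prim : IsPrimitiveRoot rrz 5 := by
  have := Complex.isPrimitiveRoot_exp 5 (by norm_num)
  simpa [rrz] using this

lemma rrz_ne_one : rrz ≠ 1 := rrz_prim.ne_one (by norm_num)

lemma rrz_sum : 1 + rrz + rrz ^ 2 + rrz ^ 3 + rrz ^ 4 = 0 := by
  have h : (rrz - 1) * (1 + rrz + rrz ^ 2 + rrz ^ 3 + rrz ^ 4) = 0 := by
    linear_combination rrz5
  rcases mul_eq_zero.mp h with h | h
  · exact absurd (sub_eq_zero.mp h) rrz_ne_one
  · exact h

lemma rrz_norm : ‖rrz‖ = 1 := by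
  have : (2 * Real.pi * I / 5 : ℂ) = ((2 * Real.pi / 5 : ℝ) : ℂ) * I := by push_cast; ring
  rw [rrz, this, Complex.norm_exp_ofReal_mul_I]

lemma rrz_pow_norm (n : ℕ) : ‖rrz ^ n‖ = 1 := by rw [norm_pow, rrz_norm, one_pow]

lemma rrz_add4 : rrz + rrz ^ 4 = ((2 * Real.cos (2 * Real.pi / 5) : ℝ) : ℂ) := by
  have h4 : rrz ^ 4 = Complex.exp (-(2 * Real.pi / 5 : ℂ) * I) := by
    have h : rrz * Complex.exp (-(2 * Real.pi / 5 : ℂ) * I) = 1 := by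
      rw [rrz, ← Complex.exp_add]
      have : (2 * Real.pi * I / 5 : ℂ) + -(2 * Real.pi / 5 : ℂ) * I = 0 := by ring
      rw [this, Complex.exp_zero]
    linear_combination (Complex.exp (-(2 * Real.pi / 5 : ℂ) * I)) * rrz5 - rrz ^ 4 * h
  rw [h4]
  push_cast
  rw [Complex.cos, rrz]
  have : (2 * Real.pi * I / 5 : ℂ) = (2 * Real.pi / 5 : ℂ) * I := by ring
  rw [this]
  ring

lemma rr_cos25 : Real.cos (2 * Real.pi / 5) = (Real.sqrt 5 - 1) / 4 := by
  have : 2 * Real.pi / 5 = 2 * (Real.pi / 5) := by ring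
  rw [this, Real.cos_two_mul, Real.cos_pi_div_five]
  have h5 : Real.sqrt 5 ^ 2 = 5 := Real.sq_sqrt (by norm_num)
  nlinarith

lemma rrz_gauss : rrz - rrz ^ 2 - rrz ^ 3 + rrz ^ 4 = ((Real.sqrt 5 : ℝ) : ℂ) := by
  have h := rrz_add4
  rw [rr_cos25] at h
  push_cast at h
  linear_combination 2 * h - rrz_sum

lemma rr_sqrt5_sq : ((Real.sqrt 5 : ℝ) : ℂ) ^ 2 = 5 := by
  rw [← Complex.ofReal_pow, Real.sq_sqrt (by norm_num)]; norm_num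

lemma rr_one_sub_ne {w : ℂ} (h : ‖w‖ < 1) : 1 - w ≠ 0 := by
  intro h0
  rw [← sub_eq_zero.mp h0] at h
  simp at h

lemma rr_inv_eq {w y : ℂ} (h : ‖w‖ < 1) (hy : w ^ 5 = y) :
    1 / (1 - w) = (1 + w + w ^ 2 + w ^ 3 + w ^ 4) / (1 - y) := by
  have h1 := rr_one_sub_ne h
  have h2 : 1 - y ≠ 0 := by
    rw [← hy]; apply rr_one_sub_ne; rw [norm_pow]; exact pow_lt_one₀ (norm_nonneg _) h (by norm_num)
  rw [div_eq_div_iff h1 h2, ← hy]; ring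

lemma rrP_pf {x : ℂ} (hx : ‖x‖ < 1) :
    ((Real.sqrt 5 : ℝ) : ℂ) * rrP x = 1 / (1 - rrz * x) - 1 / (1 - rrz ^ 2 * x)
      - 1 / (1 - rrz ^ 3 * x) + 1 / (1 - rrz ^ 4 * x) := by
  have hn : ∀ k : ℕ, ‖rrz ^ k * x‖ < 1 := fun k => by rw [norm_mul, rrz_pow_norm, one_mul]; exact hx
  have h5 : ∀ k : ℕ, (rrz ^ k * x) ^ 5 = x ^ 5 := fun k => by
    rw [mul_pow, ← pow_mul, mul_comm k 5, pow_mul, rrz5, one_pow, one_mul]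
  have e1 := rr_inv_eq (hn 1) (h5 1)
  rw [pow_one] at e1
  rw [e1, rr_inv_eq (hn 2) (h5 2), rr_inv_eq (hn 3) (h5 3), rr_inv_eq (hn 4) (h5 4), rrP,
    ← rrz_gauss]
  have z6 : rrz ^ 6 = rrz := by linear_combination rrz * rrz5
  have z8 : rrz ^ 8 = rrz ^ 3 := by linear_combination rrz ^ 3 * rrz5
  have z9 : rrz ^ 9 = rrz ^ 4 := by linear_combination rrz ^ 4 * rrz5
  have z12 : rrz ^ 12 = rrz ^ 2 := by linear_combination (rrz ^ 7 + rrz ^ 2) * rrz5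
  have z16 : rrz ^ 16 = rrz := by linear_combination (rrz ^ 11 + rrz ^ 6 + rrz) * rrz5
  rw [← mul_div_assoc, ← sub_div, ← sub_div, ← add_div]
  congr 1
  linear_combination (x ^ 2 + x ^ 3) * z6 + (x ^ 4 - x ^ 2) * z8 + x ^ 3 * z9
    + (x ^ 4 - x ^ 3) * z12 - x ^ 4 * z16

lemma rr_re_lower {w : ℂ} (h : ‖w‖ < 1) : -‖w‖ ≤ (1 / (1 - w) - 1).re := by
  have h1 := rr_one_sub_ne h
  have hr := norm_nonneg w
  have e : (1 / (1 - w)).re = (1 - w.re) / Complex.normSq (1 - w) := by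
    simp [Complex.inv_re]
  have hN : 0 < Complex.normSq (1 - w) := Complex.normSq_pos.mpr h1
  have hN2 : Complex.normSq (1 - w) = 1 - 2 * w.re + ‖w‖ ^ 2 := by
    rw [← Complex.normSq_eq_norm_sq, Complex.normSq_apply, Complex.normSq_apply]; simp; ring
  have ha1 := (abs_le.mp (Complex.abs_re_le_norm w)).1
  have ha2 := (abs_le.mp (Complex.abs_re_le_norm w)).2
  rw [Complex.sub_re, e, Complex.one_re, le_sub_iff_add_le, le_div_iff₀ hN, hN2]
  nlinarith [mul_nonneg hr (sub_nonneg.mpr h.le), mul_nonneg (mul_nonneg hr hr) hr,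
    mul_nonneg (sub_nonneg.mpr ha2) hr, mul_nonneg (sub_nonneg.mpr ha2) (sub_nonneg.mpr h.le),
    mul_nonneg (by linarith : 0 ≤ w.re + ‖w‖) (sub_nonneg.mpr h.le),
    mul_nonneg (by linarith : 0 ≤ w.re + ‖w‖) hr, mul_nonneg (mul_nonneg hr (sub_nonneg.mpr h.le)) hr]

lemma rr_E_eq {w : ℂ} (h : ‖w‖ < 1) : 1 / (1 - w) - 1 = w / (1 - w) := by
  have := rr_one_sub_ne h
  field_simp; ring

lemma rr_E_le {w : ℂ} (h : ‖w‖ < 1) : (1 / (1 - w) - 1).re ≤ ‖w‖ / (1 - ‖w‖) := by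
  refine (Complex.re_le_norm _).trans ?_
  rw [rr_E_eq h, norm_div]
  have : 1 - ‖w‖ ≤ ‖1 - w‖ := by
    have := norm_sub_norm_le (1 : ℂ) w; simpa using this
  gcongr

lemma rr_E_le' {w : ℂ} (h : ‖w‖ < 1) (h4 : 1 / 4 ≤ ‖1 - w‖) : (1 / (1 - w) - 1).re ≤ 4 * ‖w‖ := by
  refine (Complex.re_le_norm _).trans ?_
  rw [rr_E_eq h, norm_div, div_le_iff₀ (by linarith)]
  nlinarith [norm_nonneg w]

lemma rr_re_P_bound {x : ℂ} (hx : ‖x‖ < 1) :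
    -(Real.sqrt 5 * (rrP x).re) ≤ (1 / (1 - rrz ^ 2 * x) - 1).re + (1 / (1 - rrz ^ 3 * x) - 1).re
      + 2 * ‖x‖ := by
  have hn : ∀ k : ℕ, ‖rrz ^ k * x‖ = ‖x‖ := fun k => by rw [norm_mul, rrz_pow_norm, one_mul]
  have h := congrArg Complex.re (rrP_pf hx)
  rw [Complex.re_ofReal_mul] at h
  have h1 := rr_re_lower (w := rrz ^ 1 * x) (by rw [hn]; exact hx)
  have h4 := rr_re_lower (w := rrz ^ 4 * x) (by rw [hn]; exact hx)
  rw [hn] at h1 h4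
  rw [pow_one] at h1
  simp only [Complex.sub_re, Complex.add_re, Complex.one_re] at h h1 h4 ⊢
  linarith

lemma rr_z23 : (1 : ℝ) ≤ ‖rrz ^ 2 - rrz ^ 3‖ := by
  have e : rrz ^ 2 - rrz ^ 3 = rrz ^ 2 * (1 - rrz) := by ring
  rw [e, norm_mul, rrz_pow_norm, one_mul]
  have hs : 1 ≤ ‖1 - rrz‖ ^ 2 := by
    have e2 : (1 - rrz) = 1 - Complex.exp (((2 * Real.pi / 5 : ℝ) : ℂ) * I) := by
      rw [rrz]; congr 2; push_cast; ring
    rw [← Complex.normSq_eq_norm_sq, Complex.normSq_apply, e2]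
    rw [Complex.sub_re, Complex.sub_im, Complex.exp_ofReal_mul_I_re, Complex.exp_ofReal_mul_I_im]
    simp only [Complex.one_re, Complex.one_im]
    have := Real.sin_sq_add_cos_sq (2 * Real.pi / 5)
    have h2 := rr_cos25
    have h3 : Real.sqrt 5 ≤ 2.25 := Real.sqrt_le_iff.mpr ⟨by norm_num, by norm_num⟩
    nlinarith
  nlinarith [norm_nonneg (1 - rrz)]

lemma rr_re_P_gen {x : ℂ} (hx : ‖x‖ < 1) :
    -(Real.sqrt 5 * (rrP x).re) ≤ ‖x‖ / (1 - ‖x‖) + 6 * ‖x‖ := by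
  have hn : ∀ k : ℕ, ‖rrz ^ k * x‖ = ‖x‖ := fun k => by rw [norm_mul, rrz_pow_norm, one_mul]
  have h := rr_re_P_bound hx
  have h2 := rr_E_le (w := rrz ^ 2 * x) (by rw [hn]; exact hx)
  have h3 := rr_E_le (w := rrz ^ 3 * x) (by rw [hn]; exact hx)
  rw [hn] at h2 h3
  by_cases c2 : 1 / 4 ≤ ‖1 - rrz ^ 2 * x‖
  · have h2' := rr_E_le' (w := rrz ^ 2 * x) (by rw [hn]; exact hx) c2
    rw [hn] at h2'
    linarith
  by_cases c3 : 1 / 4 ≤ ‖1 - rrz ^ 3 * x‖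
  · have h3' := rr_E_le' (w := rrz ^ 3 * x) (by rw [hn]; exact hx) c3
    rw [hn] at h3'
    linarith
  exfalso
  push Not at c2 c3
  have a1 : ‖x‖ ≥ 3 / 4 := by
    have := norm_sub_norm_le (1 : ℂ) (rrz ^ 2 * x)
    rw [hn, norm_one] at this
    linarith
  have a2 : ‖(rrz ^ 2 - rrz ^ 3) * x‖ ≤ ‖1 - rrz ^ 2 * x‖ + ‖1 - rrz ^ 3 * x‖ := by
    have : (rrz ^ 2 - rrz ^ 3) * x = (1 - rrz ^ 3 * x) - (1 - rrz ^ 2 * x) := by ring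
    rw [this, add_comm]
    exact norm_sub_le _ _
  rw [norm_mul] at a2
  nlinarith [rr_z23]


lemma rr_norm_exp (σ φ : ℝ) : ‖Complex.exp (-(σ : ℂ) + φ * I)‖ = Real.exp (-σ) := by
  rw [Complex.norm_exp]; simp

lemma rr_dist_lower {σ ψ : ℝ} (hσ : σ ≤ 1) :
    |Real.sin (ψ / 2)| ≤ ‖1 - Complex.exp (-(σ : ℂ) + ψ * I)‖ := by
  apply abs_le_of_sq_le_sq _ (norm_nonneg _)
  rw [← Complex.normSq_eq_norm_sq, Complex.normSq_apply, Complex.sub_re, Complex.sub_im,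
    Complex.exp_re, Complex.exp_im]
  simp only [Complex.one_re, Complex.one_im, Complex.add_re, Complex.add_im, Complex.neg_re,
    Complex.neg_im, Complex.ofReal_re, Complex.ofReal_im, Complex.mul_re, Complex.mul_im,
    Complex.I_re, Complex.I_im, mul_zero, mul_one, sub_zero, add_zero, neg_zero, zero_add]
  have h1 : Real.exp (-σ) ≥ 1 / 4 := by
    have h := Real.exp_le_exp.mpr (neg_le_neg hσ)
    have h2 : (1 : ℝ) / 4 ≤ Real.exp (-1) := by
      rw [Real.exp_neg, one_div]
      apply inv_anti₀ (Real.exp_pos 1)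
      have := Real.exp_one_lt_d9
      linarith
    linarith
  have h2 : Real.cos ψ = 1 - 2 * Real.sin (ψ / 2) ^ 2 := by
    have h3 : ψ = 2 * (ψ / 2) := by ring
    have h4 := Real.sin_sq_add_cos_sq (ψ / 2)
    rw [h3, Real.cos_two_mul]
    ring_nf at h4 ⊢
    linarith
  have h5 := Real.sin_sq_add_cos_sq ψ
  set r := Real.exp (-σ)
  have : (1 - r * Real.cos ψ) * (1 - r * Real.cos ψ) + (0 - r * Real.sin ψ) * (0 - r * Real.sin ψ)
      = (1 - r) ^ 2 + 4 * r * Real.sin (ψ / 2) ^ 2 := by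
    have : (1 - r * Real.cos ψ) * (1 - r * Real.cos ψ) + (0 - r * Real.sin ψ) * (0 - r * Real.sin ψ)
      = 1 - 2 * r * Real.cos ψ + r ^ 2 * (Real.sin ψ ^ 2 + Real.cos ψ ^ 2) := by ring
    rw [this, h5, h2]; ring
  rw [this]
  nlinarith [sq_nonneg (1 - r), sq_nonneg (Real.sin (ψ / 2))]

lemma rr_abs_sin {t : ℝ} (h : |t| ≤ Real.pi) : |t| / Real.pi ≤ |Real.sin (t / 2)| := by
  have hp := Real.pi_pos
  have h1 := Real.mul_le_sin (x := |t| / 2) (by positivity) (by linarith)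
  have h2 : 2 / Real.pi * (|t| / 2) = |t| / Real.pi := by ring
  rw [h2] at h1
  refine h1.trans ?_
  rcases abs_cases t with ⟨h3, _⟩ | ⟨h3, _⟩
  · rw [h3]; exact le_abs_self _
  · rw [h3, neg_div, Real.sin_neg]; exact neg_le_abs _

lemma rr_first {σ φ : ℝ} (h0 : 0 < σ) (h1 : σ ≤ 1) (hφ0 : 0 ≤ φ) (hφ1 : φ ≤ Real.pi)
    (hK : 100 * σ ≤ |φ - 4 * Real.pi / 5|) :
    -(Real.sqrt 5 * (rrP (Complex.exp (-(σ : ℂ) + φ * I))).re) ≤ Real.pi / (100 * σ) + 7 := by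
  have hp := Real.pi_pos
  have hn := rr_norm_exp σ φ
  have hlt : Real.exp (-σ) < 1 := by rw [Real.exp_lt_one_iff]; linarith
  have h := rr_re_P_bound (x := Complex.exp (-(σ : ℂ) + φ * I)) (by rw [hn]; exact hlt)
  have e2 : rrz ^ 2 * Complex.exp (-(σ : ℂ) + φ * I)
      = Complex.exp (-(σ : ℂ) + ((φ + 4 * Real.pi / 5 - 2 * Real.pi : ℝ) : ℂ) * I) := by
    rw [rrz, ← Complex.exp_nat_mul, ← Complex.exp_add, Complex.exp_eq_exp_iff_exists_int]
    refine ⟨1, ?_⟩; push_cast; ring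
  have e3 : rrz ^ 3 * Complex.exp (-(σ : ℂ) + φ * I)
      = Complex.exp (-(σ : ℂ) + ((φ - 4 * Real.pi / 5 : ℝ) : ℂ) * I) := by
    rw [rrz, ← Complex.exp_nat_mul, ← Complex.exp_add, Complex.exp_eq_exp_iff_exists_int]
    refine ⟨1, ?_⟩; push_cast; ring
  rw [e2, e3, hn] at h
  have d2 := rr_dist_lower (σ := σ) (ψ := φ + 4 * Real.pi / 5 - 2 * Real.pi) h1
  have d3 := rr_dist_lower (σ := σ) (ψ := φ - 4 * Real.pi / 5) h1
  have s2 : 1 / 5 ≤ |Real.sin ((φ + 4 * Real.pi / 5 - 2 * Real.pi) / 2)| := by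
    by_cases hc : φ ≤ Real.pi / 5
    · have s := rr_abs_sin (t := φ + 4 * Real.pi / 5) (abs_le.mpr ⟨by linarith, by linarith⟩)
      have e : (φ + 4 * Real.pi / 5 - 2 * Real.pi) / 2 = (φ + 4 * Real.pi / 5) / 2 - Real.pi := by ring
      rw [e, Real.sin_sub_pi, abs_neg]
      refine le_trans ?_ s
      rw [abs_of_nonneg (by positivity), le_div_iff₀ hp]
      linarith
    · push Not at hc
      have s := rr_abs_sin (t := φ + 4 * Real.pi / 5 - 2 * Real.pi)
        (abs_le.mpr ⟨by linarith, by linarith⟩)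
      refine le_trans ?_ s
      rw [abs_of_nonpos (by linarith), le_div_iff₀ hp]
      linarith
  have s3 : 100 * σ / Real.pi ≤ |Real.sin ((φ - 4 * Real.pi / 5) / 2)| := by
    refine le_trans ?_ (rr_abs_sin (t := φ - 4 * Real.pi / 5) (abs_le.mpr ⟨by linarith, by linarith⟩))
    gcongr
  have key : ∀ (w : ℂ) (c : ℝ), 0 < c → c ≤ ‖1 - w‖ → (1 / (1 - w) - 1).re ≤ 1 / c - 1 := by
    intro w c hc hw
    have := Complex.re_le_norm (1 / (1 - w))
    rw [norm_div, norm_one] at this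
    have h2 : 1 / ‖1 - w‖ ≤ 1 / c := one_div_le_one_div_of_le hc hw
    rw [Complex.sub_re, Complex.one_re]
    linarith
  have k2 := key _ _ (by norm_num) (s2.trans d2)
  have k3 := key _ _ (by positivity) (s3.trans d3)
  rw [one_div_div] at k3
  linarith

lemma rr_minor : ∃ σ₀ : ℝ, 0 < σ₀ ∧ ∀ σ φ : ℝ, 0 < σ → σ ≤ σ₀ → 0 ≤ φ → φ ≤ Real.pi →
    100 * σ ≤ |φ - 4 * Real.pi / 5| →
    (rrG (Complex.exp (-(σ : ℂ) + φ * I))).re ≤ (4 * Real.pi ^ 2 / 125 - 1 / 100) / σ := by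
  have hz2 : HasSum (fun n : ℕ => 1 / ((n : ℝ) + 2) ^ 2) (Real.pi ^ 2 / 6 - 1) := by
    have := (hasSum_nat_add_iff' 2).mpr hasSum_zeta_two
    simpa [Finset.sum_range_succ] using this
  have hz3 : Summable (fun n : ℕ => 1 / ((n : ℝ) + 2) ^ (3 / 2 : ℝ)) := by
    have := (summable_nat_add_iff 2).mpr (Real.summable_one_div_nat_rpow.mpr (by norm_num : (1:ℝ) < 3 / 2))
    simpa using this
  set Z := ∑' n : ℕ, 1 / ((n : ℝ) + 2) ^ (3 / 2 : ℝ) with hZ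
  have hZ0 : 0 ≤ Z := tsum_nonneg (fun n => by positivity)
  refine ⟨min 1 (1 / (1000 * (7 + 6 * Z)) ^ 2), lt_min one_pos (by positivity), ?_⟩
  intro σ φ h0 hσ hφ0 hφ1 hK
  have h1 : σ ≤ 1 := hσ.trans (min_le_left _ _)
  have h2 : σ ≤ 1 / (1000 * (7 + 6 * Z)) ^ 2 := hσ.trans (min_le_right _ _)
  have h3 : Real.sqrt σ ≤ 1 / (1000 * (7 + 6 * Z)) := by
    rw [Real.sqrt_le_iff]; refine ⟨by positivity, ?_⟩
    rw [one_div_pow]; exact h2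
  have hsq : Real.sqrt σ * Real.sqrt σ = σ := Real.mul_self_sqrt h0.le
  have hs0 : 0 < Real.sqrt σ := Real.sqrt_pos.mpr h0
  set q := Complex.exp (-(σ : ℂ) + φ * I) with hq
  have hn : ‖q‖ = Real.exp (-σ) := rr_norm_exp σ φ
  have hlt : ‖q‖ < 1 := by rw [hn, Real.exp_lt_one_iff]; linarith
  have hs := (rr_prod q hlt).2
  have hG : HasSum (fun n : ℕ => -(Real.sqrt 5 * (rrP (q ^ (n + 1))).re / ((n : ℝ) + 1)))
      (Real.sqrt 5 * (rrG q).re) := by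
    have := (Complex.hasSum_re hs.hasSum.neg).mul_left (Real.sqrt 5)
    rw [rrG]
    refine rr_hs_congr this (fun n => ?_)
    have : ((n : ℂ) + 1) = (((n : ℝ) + 1 : ℝ) : ℂ) := by push_cast; rfl
    rw [this, Complex.neg_re, Complex.div_ofReal_re]
    ring
  rw [← hasSum_nat_add_iff' 1] at hG
  simp only [Finset.sum_range_one, Nat.cast_zero, zero_add, pow_one, div_one] at hG
  have hB : HasSum (fun n : ℕ => 1 / σ * (1 / ((n : ℝ) + 2) ^ 2)
      + 6 / Real.sqrt σ * (1 / ((n : ℝ) + 2) ^ (3 / 2 : ℝ)))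
      (1 / σ * (Real.pi ^ 2 / 6 - 1) + 6 / Real.sqrt σ * Z) :=
    (hz2.mul_left _).add (hz3.hasSum.mul_left _)
  have hle := hasSum_le (fun n => ?_) hG hB
  · have hf := rr_first h0 h1 hφ0 hφ1 hK
    rw [← hq] at hf
    have h5 : Real.sqrt 5 ≥ 2.236 := Real.le_sqrt_of_sq_le (by norm_num)
    have h5' : Real.sqrt 5 ≤ 2.2361 := Real.sqrt_le_iff.mpr ⟨by norm_num, by norm_num⟩
    have hp1 := Real.pi_gt_d4
    have hp2 := Real.pi_lt_d4
    rw [le_div_iff₀ h0]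
    have hfin : Real.sqrt 5 * (rrG q).re ≤ 1 / σ * (Real.pi ^ 2 / 6 - 1) + 6 / Real.sqrt σ * Z
      + (Real.pi / (100 * σ) + 7) := by linarith
    have hm := mul_le_mul_of_nonneg_right hfin h0.le
    have em : (1 / σ * (Real.pi ^ 2 / 6 - 1) + 6 / Real.sqrt σ * Z
      + (Real.pi / (100 * σ) + 7)) * σ = Real.pi ^ 2 / 6 - 1 + Real.pi / 100 + (6 * Z * Real.sqrt σ + 7 * σ) := by
      have e1 : 6 / Real.sqrt σ * Z * σ = 6 * Z * Real.sqrt σ := by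
        have := Real.div_sqrt (x := σ)
        calc 6 / Real.sqrt σ * Z * σ = 6 * Z * (σ / Real.sqrt σ) := by ring
          _ = _ := by rw [this]
      have e2 : 1 / σ * (Real.pi ^ 2 / 6 - 1) * σ = Real.pi ^ 2 / 6 - 1 := by field_simp
      have e3 : Real.pi / (100 * σ) * σ = Real.pi / 100 := by field_simp
      rw [add_mul, add_mul, add_mul, e1, e2, e3]; ring
    rw [em] at hm
    have h8 : 6 * Z * Real.sqrt σ + 7 * σ ≤ 1 / 1000 := by
      have : Real.sqrt σ ≤ 1 := Real.sqrt_le_one.mpr h1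
      rw [le_div_iff₀ (by positivity)] at h3
      nlinarith
    have hpp : Real.pi ^ 2 ≤ 9.8697 := by nlinarith
    have : Real.sqrt 5 * ((rrG q).re * σ) ≤ Real.sqrt 5 * (4 * Real.pi ^ 2 / 125 - 1 / 100) := by
      nlinarith
    exact le_of_mul_le_mul_left this (by linarith)
  · have hj : (0 : ℝ) < (n : ℝ) + 2 := by positivity
    have hx : ‖q ^ (n + 1 + 1)‖ = Real.exp (-(((n : ℝ) + 2) * σ)) := by
      rw [norm_pow, hn, ← Real.exp_nat_mul]; congr 1; push_cast; ring
    have hx1 : ‖q ^ (n + 1 + 1)‖ < 1 := by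
      rw [hx, Real.exp_lt_one_iff]; have := mul_pos hj h0; linarith
    have hg := rr_re_P_gen hx1
    rw [hx] at hg
    set t := ((n : ℝ) + 2) * σ with ht
    have ht0 : 0 < t := mul_pos hj h0
    have b1 : Real.exp (-t) / (1 - Real.exp (-t)) ≤ 1 / t := by
      have hl : Real.exp (-t) < 1 := by rw [Real.exp_lt_one_iff]; linarith
      rw [div_le_div_iff₀ (by linarith) ht0]
      have := Real.add_one_le_exp t
      have h3 : Real.exp (-t) * Real.exp t = 1 := by rw [← Real.exp_add]; simp
      nlinarith [Real.exp_pos (-t)]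
    have b2 : Real.exp (-t) ≤ 1 / Real.sqrt t := by
      rw [le_div_iff₀ (Real.sqrt_pos.mpr ht0)]
      have h3 : Real.exp (-t) * Real.exp t = 1 := by rw [← Real.exp_add]; simp
      have h4 : Real.sqrt t ≤ Real.exp t := by
        have := Real.add_one_le_exp t
        have : Real.sqrt t ≤ t + 1 := by
          nlinarith [Real.sq_sqrt ht0.le, Real.sqrt_nonneg t, sq_nonneg (Real.sqrt t - 1)]
        linarith
      nlinarith [Real.exp_pos (-t)]
    have e3 : ((n : ℝ) + 2) ^ (3 / 2 : ℝ) = ((n : ℝ) + 2) * Real.sqrt ((n : ℝ) + 2) := by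
      rw [Real.sqrt_eq_rpow, ← Real.rpow_one_add' hj.le (by norm_num)]; norm_num
    have : -(Real.sqrt 5 * (rrP (q ^ (n + 1 + 1))).re) ≤ 1 / t + 6 * (1 / Real.sqrt t) := by linarith
    have h9 := div_le_div_of_nonneg_right this hj.le
    have e4 : -(Real.sqrt 5 * (rrP (q ^ (n + 1 + 1))).re / (((n + 1 : ℕ) : ℝ) + 1))
       = -(Real.sqrt 5 * (rrP (q ^ (n + 1 + 1))).re) / ((n : ℝ) + 2) := by
      push_cast; ring
    rw [e4]
    refine h9.trans (le_of_eq ?_)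
    rw [e3, ht, Real.sqrt_mul hj.le]
    field_simp


def rrCone (K : ℝ) : Set ℂ := {t | 0 < t.re ∧ |t.im| ≤ K * t.re}

lemma rrCone_smul {K x : ℝ} (hx : 0 < x) {s : ℂ} (hs : s ∈ rrCone K) : (x : ℂ) * s ∈ rrCone K := by
  obtain ⟨h1, h2⟩ := hs
  refine ⟨?_, ?_⟩
  · rw [Complex.re_ofReal_mul]; positivity
  · rw [Complex.re_ofReal_mul, Complex.im_ofReal_mul, abs_mul, abs_of_pos hx]
    nlinarith

lemma rrCone_norm {K : ℝ} {t : ℂ} (ht : t ∈ rrCone K) : ‖t‖ ≤ (1 + K) * t.re := by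
  have := Complex.norm_le_abs_re_add_abs_im t
  rw [abs_of_pos ht.1] at this
  linarith [ht.2]

lemma rrCone_enlarge {K : ℝ} (hK : 0 ≤ K) {t z : ℂ} (ht : t ∈ rrCone K)
    (hz : ‖z - t‖ ≤ ‖t‖ / (2 * (1 + K))) : z ∈ rrCone (2 * K + 1) := by
  have h1 := rrCone_norm ht
  have h2 : ‖t‖ / (2 * (1 + K)) ≤ t.re / 2 := by
    rw [div_le_div_iff₀ (by positivity) (by norm_num)]; nlinarith
  have h3 := (Complex.abs_re_le_norm (z - t)).trans (hz.trans h2)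
  have h4 := (Complex.abs_im_le_norm (z - t)).trans (hz.trans h2)
  rw [Complex.sub_re, abs_le] at h3
  rw [Complex.sub_im, abs_le] at h4
  obtain ⟨p1, p2⟩ := ht
  rw [abs_le] at p2
  refine ⟨by linarith, ?_⟩
  rw [abs_le]
  constructor <;> nlinarith

structure rrGood (k : ℂ → ℂ) (d : ℂ) : Prop where
  diff : ∀ t : ℂ, 0 < t.re → DifferentiableAt ℂ k t
  bdd : ∀ K : ℝ, 0 ≤ K → ∃ C : ℝ, 0 ≤ C ∧ ∀ t ∈ rrCone K, ‖k t‖ ≤ C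
  lim : ∀ K : ℝ, 0 ≤ K → Tendsto k (𝓝[rrCone K] 0) (𝓝 d)

lemma rrGood.deriv_bound {k : ℂ → ℂ} {d : ℂ} (h : rrGood k d) {K : ℝ} (hK : 0 ≤ K) :
    ∃ C : ℝ, 0 ≤ C ∧ (∀ t ∈ rrCone K, ‖k t‖ ≤ C) ∧ ∀ t ∈ rrCone K, ‖deriv k t‖ ≤ C / ‖t‖ := by
  obtain ⟨C, hC, hb⟩ := h.bdd (2 * K + 1) (by positivity)
  refine ⟨C * (2 * (1 + K)), by positivity, ?_, ?_⟩
  · intro t ht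
    have : ‖k t‖ ≤ C := hb t (rrCone_enlarge hK ht (by simp; positivity))
    nlinarith
  · intro t ht
    have hp : 0 < ‖t‖ := norm_pos_iff.mpr (fun h0 => by have := ht.1; rw [h0] at this; simp at this)
    have hR : 0 < ‖t‖ / (2 * (1 + K)) := by positivity
    have := Complex.norm_deriv_le_of_forall_mem_sphere_norm_le (f := k) (c := t) (C := C) hR
      (DifferentiableOn.diffContOnCl (fun z hz => (h.diff z
        (rrCone_enlarge hK ht (by
          have := Metric.closure_ball_subset_closedBall hz
          rw [Metric.mem_closedBall, dist_eq_norm] at this; exact this)).1).differentiableWithinAt))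
      (fun z hz => hb z (rrCone_enlarge hK ht (by
          rw [mem_sphere_iff_norm] at hz; exact hz.le)))
    refine this.trans (le_of_eq ?_)
    field_simp

lemma rrGood.diff_bound {k : ℂ → ℂ} {d : ℂ} (h : rrGood k d) {K : ℝ} (hK : 0 ≤ K) :
    ∃ C : ℝ, 0 ≤ C ∧ ∀ s ∈ rrCone K, ∀ x y : ℝ, 1 ≤ x → x ≤ y → y ≤ x + 4 →
      ‖k (x * s) / x - k (y * s) / y‖ ≤ C / x ^ 2 := by
  obtain ⟨C, hC, hb, hd⟩ := h.deriv_bound hK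
  refine ⟨8 * C, by positivity, ?_⟩
  intro s hs x y hx hxy hy
  have hx0 : 0 < x := by linarith
  have hy0 : 0 < y := by linarith
  have hp : 0 < ‖s‖ := norm_pos_iff.mpr (fun h0 => by have := hs.1; rw [h0] at this; simp at this)
  have h1 : ‖k (y * s) - k (x * s)‖ ≤ C / x * ‖y - x‖ := by
    have hder : ∀ u ∈ Set.Icc x y, HasDerivWithinAt (fun u : ℝ => k (u * s)) (deriv k (u * s) * s)
        (Set.Icc x y) u := by
      intro u hu
      have hu0 : 0 < u := by linarith [hu.1]
      have hk := (h.diff (u * s) (rrCone_smul hu0 hs).1).hasDerivAt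
      have h2 : HasDerivAt (fun z : ℂ => z * s) s (u : ℂ) := by
        simpa using (hasDerivAt_id (u : ℂ)).mul_const s
      have h3 : HasDerivAt (fun z : ℂ => k (z * s)) (deriv k (u * s) * s) (u : ℂ) :=
        HasDerivAt.comp (u : ℂ) hk h2
      exact h3.comp_ofReal.hasDerivWithinAt
    refine Convex.norm_image_sub_le_of_norm_hasDerivWithin_le (f := fun u : ℝ => k (u * s)) hder ?_
      (convex_Icc x y) (Set.left_mem_Icc.mpr hxy) (Set.right_mem_Icc.mpr hxy)
    intro u hu
    have hu0 : 0 < u := by linarith [hu.1]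
    have := hd _ (rrCone_smul hu0 hs)
    rw [norm_mul, Complex.norm_real, Real.norm_of_nonneg hu0.le] at this
    rw [norm_mul]
    calc ‖deriv k (u * s)‖ * ‖s‖ ≤ C / (u * ‖s‖) * ‖s‖ := by gcongr
      _ = C / u := by field_simp
      _ ≤ C / x := by gcongr; exact hu.1
  rw [Real.norm_of_nonneg (by linarith)] at h1
  have hb1 := hb _ (rrCone_smul hy0 hs)
  have e : k (x * s) / x - k (y * s) / y = -(k (y * s) - k (x * s)) / x
      + k (y * s) * (((1 / x - 1 / y : ℝ)) : ℂ) := by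
    push_cast; ring
  rw [e]
  have h3 : ‖-(k (y * s) - k (x * s)) / (x : ℂ)‖ ≤ 4 * C / x ^ 2 := by
    rw [norm_div, norm_neg, Complex.norm_real, Real.norm_of_nonneg hx0.le]
    calc ‖k (y * s) - k (x * s)‖ / x ≤ (C / x * (y - x)) / x := by gcongr
      _ ≤ (C / x * 4) / x := by gcongr; linarith
      _ = _ := by ring
  have h4 : ‖k (y * s) * (((1 / x - 1 / y : ℝ)) : ℂ)‖ ≤ 4 * C / x ^ 2 := by
    rw [norm_mul, Complex.norm_real]
    have h5 : ‖1 / x - 1 / y‖ ≤ 4 / x ^ 2 := by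
      have : 1 / x - 1 / y = (y - x) / (x * y) := by field_simp
      rw [this, Real.norm_of_nonneg (div_nonneg (by linarith) (by positivity))]
      apply div_le_div₀ (by norm_num) (by linarith) (by positivity)
      nlinarith
    calc ‖k (y * s)‖ * ‖1 / x - 1 / y‖ ≤ C * (4 / x ^ 2) := by gcongr
      _ = _ := by ring
  calc _ ≤ _ := norm_add_le _ _
    _ ≤ 4 * C / x ^ 2 + 4 * C / x ^ 2 := add_le_add h3 h4
    _ = _ := by ring

lemma rr_summ_sq (c : ℝ) (hc : 1 ≤ c) (C : ℝ) (hC : 0 ≤ C) : Summable (fun m : ℕ => C / (5 * (m : ℝ) + c) ^ 2) := by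
  have h := ((summable_nat_add_iff 1).mpr (Real.summable_one_div_nat_pow.mpr (by norm_num : 1 < 2))).mul_left C
  refine Summable.of_nonneg_of_le (fun m => by positivity) (fun m => ?_) h
  rw [mul_one_div]
  push_cast
  gcongr
  linarith [(Nat.cast_nonneg m : (0:ℝ) ≤ m)]

lemma rrGood.tannery {k : ℂ → ℂ} {d : ℂ} (h : rrGood k d) {K : ℝ} (hK : 0 ≤ K) (c : ℝ) (hc : 1 ≤ c)
    (hc5 : c ≤ 5) :
    (∀ s ∈ rrCone K, Summable (fun m : ℕ => k ((5 * (m : ℝ) + c : ℝ) * s) / ((5 * (m : ℝ) + c : ℝ) : ℂ)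
      - k ((5 * (m : ℝ) + 5 : ℝ) * s) / ((5 * (m : ℝ) + 5 : ℝ) : ℂ))) ∧
    Tendsto (fun s : ℂ => ∑' m : ℕ, (k ((5 * (m : ℝ) + c : ℝ) * s) / ((5 * (m : ℝ) + c : ℝ) : ℂ)
      - k ((5 * (m : ℝ) + 5 : ℝ) * s) / ((5 * (m : ℝ) + 5 : ℝ) : ℂ))) (𝓝[rrCone K] 0)
      (𝓝 (∑' m : ℕ, (d / ((5 * (m : ℝ) + c : ℝ) : ℂ) - d / ((5 * (m : ℝ) + 5 : ℝ) : ℂ)))) := by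
  obtain ⟨C, hC, hb⟩ := h.diff_bound hK
  have hm : ∀ m : ℕ, (0:ℝ) ≤ m := fun m => Nat.cast_nonneg m
  have hbd : ∀ s ∈ rrCone K, ∀ m : ℕ, ‖k ((5 * (m : ℝ) + c : ℝ) * s) / ((5 * (m : ℝ) + c : ℝ) : ℂ)
      - k ((5 * (m : ℝ) + 5 : ℝ) * s) / ((5 * (m : ℝ) + 5 : ℝ) : ℂ)‖ ≤ C / (5 * (m : ℝ) + c) ^ 2 :=
    fun s hs m => hb s hs _ _ (by linarith [hm m]) (by linarith) (by linarith)
  have hS := rr_summ_sq c hc C hC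
  refine ⟨fun s hs => Summable.of_norm_bounded hS (hbd s hs), ?_⟩
  refine tendsto_tsum_of_dominated_convergence hS ?_ ?_
  · intro m
    have hl : ∀ x : ℝ, 0 < x → Tendsto (fun s : ℂ => k (x * s) / (x : ℂ)) (𝓝[rrCone K] 0) (𝓝 (d / x)) := by
      intro x hx
      refine Tendsto.div_const ?_ _
      refine (h.lim K hK).comp ?_
      refine tendsto_nhdsWithin_iff.mpr ⟨?_, ?_⟩
      · have : Tendsto (fun s : ℂ => (x : ℂ) * s) (𝓝 0) (𝓝 ((x : ℂ) * 0)) :=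
          (continuous_const.mul continuous_id).tendsto 0
        rw [mul_zero] at this
        exact this.mono_left nhdsWithin_le_nhds
      · filter_upwards [self_mem_nhdsWithin] with s hs using rrCone_smul hx hs
    exact (hl _ (by linarith [hm m])).sub (hl _ (by linarith [hm m]))
  · filter_upwards [self_mem_nhdsWithin] with s hs using hbd s hs


open Classical in
noncomputable def rrE (w t : ℂ) : ℂ := 1 / (1 - w * Complex.exp (-t)) - (if w = 1 then 1 / t else 0)

open Classical in
noncomputable def rrEps (w : ℂ) : ℂ := if w = 1 then 1 / 2 else 1 / (1 - w)

lemma rr_exp_lt {w t : ℂ} (hw : ‖w‖ = 1) (ht : 0 < t.re) : ‖w * Complex.exp (-t)‖ < 1 := by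
  rw [norm_mul, hw, one_mul, Complex.norm_exp, Complex.neg_re, Real.exp_lt_one_iff]; linarith

lemma rr_lim_one : Tendsto (fun t : ℂ => 1 / (1 - Complex.exp (-t)) - 1 / t) (𝓝[≠] 0) (𝓝 (1 / 2)) := by
  have hsl : Tendsto (fun t : ℂ => (1 - Complex.exp (-t)) / t) (𝓝[≠] 0) (𝓝 1) := by
    have hd : HasDerivAt (fun t : ℂ => - Complex.exp (-t)) 1 0 := by
      have h : HasDerivAt (fun t : ℂ => - Complex.exp (-t)) (-(Complex.exp (-0) * -1)) 0 :=
        ((hasDerivAt_id (0:ℂ)).neg.cexp).neg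
      have e : -(Complex.exp (-0) * -1) = 1 := by simp
      rw [e] at h
      exact h
    have := hd.tendsto_slope
    refine this.congr (fun t => ?_)
    simp [slope_def_field]
    ring
  have hnum : Tendsto (fun t : ℂ => (Complex.exp (-t) - 1 + t) / t ^ 2) (𝓝[≠] 0) (𝓝 (1 / 2)) := by
    rw [tendsto_iff_norm_sub_tendsto_zero]
    refine squeeze_zero' (g := fun t : ℂ => ‖t‖) (Eventually.of_forall fun t => norm_nonneg _) ?_ ?_
    · have h1 : ∀ᶠ t : ℂ in 𝓝[≠] 0, ‖t‖ < 1 := by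
        refine mem_nhdsWithin_of_mem_nhds ?_
        have := Metric.ball_mem_nhds (0:ℂ) one_pos
        simpa [Metric.ball, dist_eq_norm] using this
      filter_upwards [h1, self_mem_nhdsWithin] with t ht ht0
      have ht0 : t ≠ 0 := ht0
      have hb := Complex.exp_bound (x := -t) (by rw [norm_neg]; exact ht.le) (n := 3) (by norm_num)
      simp only [Finset.sum_range_succ, Finset.sum_range_zero, norm_neg] at hb
      have e : (Complex.exp (-t) - 1 + t) / t ^ 2 - 1 / 2
        = (Complex.exp (-t) - (0 + (-t) ^ 0 / ((Nat.factorial 0 : ℕ) : ℂ) + (-t) ^ 1 / ((Nat.factorial 1 : ℕ) : ℂ)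
          + (-t) ^ 2 / ((Nat.factorial 2 : ℕ) : ℂ))) / t ^ 2 := by
        simp [Nat.factorial]
        field_simp
        ring
      rw [e, norm_div, norm_pow, div_le_iff₀ (by positivity)]
      refine hb.trans ?_
      norm_num [Nat.factorial]
      have : 0 < ‖t‖ ^ 3 := by positivity
      nlinarith
    · have : Tendsto (fun t : ℂ => ‖t‖) (𝓝 0) (𝓝 ‖(0:ℂ)‖) := continuous_norm.tendsto 0
      rw [norm_zero] at this
      exact this.mono_left nhdsWithin_le_nhds
  have := hnum.div hsl one_ne_zero
  rw [div_one] at this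
  refine this.congr' ?_
  have hne : ∀ᶠ t : ℂ in 𝓝[≠] 0, (1 - Complex.exp (-t)) / t ≠ 0 := hsl.eventually_ne one_ne_zero
  filter_upwards [hne, self_mem_nhdsWithin] with t h1 h2
  have h2 : t ≠ 0 := h2
  have h3 : 1 - Complex.exp (-t) ≠ 0 := fun h => h1 (by rw [h, zero_div])
  simp only [Pi.div_apply]
  field_simp
  ring

lemma rrE_good {w : ℂ} (hw : ‖w‖ = 1) : rrGood (rrE w) (rrEps w) := by
  have hlim : ∀ K : ℝ, 0 ≤ K → Tendsto (rrE w) (𝓝[rrCone K] 0) (𝓝 (rrEps w)) := by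
    intro K hK
    have hsub : 𝓝[rrCone K] (0:ℂ) ≤ 𝓝[≠] 0 := by
      apply nhdsWithin_mono
      intro t ht h0
      have := ht.1
      rw [Set.mem_singleton_iff.mp h0] at this
      simp at this
    refine Tendsto.mono_left ?_ hsub
    by_cases h : w = 1
    · have e1 : rrE w = fun t : ℂ => 1 / (1 - Complex.exp (-t)) - 1 / t := by
        funext t; simp [rrE, h]
      rw [e1, rrEps, if_pos h]
      exact rr_lim_one
    · have e1 : rrE w = fun t : ℂ => 1 / (1 - w * Complex.exp (-t)) := by
        funext t; simp [rrE, h]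
      rw [e1, rrEps, if_neg h]
      have hc : ContinuousAt (fun t : ℂ => 1 / (1 - w * Complex.exp (-t))) 0 := by
        refine ContinuousAt.div (by fun_prop) (by fun_prop) ?_
        simp only [neg_zero, Complex.exp_zero, mul_one]
        exact sub_ne_zero.mpr (Ne.symm h)
      have := hc.tendsto
      simp only [neg_zero, Complex.exp_zero, mul_one] at this
      exact this.mono_left nhdsWithin_le_nhds
  refine ⟨?_, ?_, hlim⟩
  · intro t ht
    have h1 := rr_one_sub_ne (rr_exp_lt hw ht)
    have h2 : t ≠ 0 := fun h0 => by rw [h0] at ht; simp at ht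
    by_cases h : w = 1
    · have e1 : rrE w = fun t : ℂ => 1 / (1 - w * Complex.exp (-t)) - 1 / t := by
        funext t; simp [rrE, h]
      rw [e1]
      refine DifferentiableAt.fun_sub (DifferentiableAt.fun_div ?_ ?_ h1)
        (DifferentiableAt.fun_div ?_ ?_ h2) <;> fun_prop
    · have e1 : rrE w = fun t : ℂ => 1 / (1 - w * Complex.exp (-t)) := by
        funext t; simp [rrE, h]
      rw [e1]
      refine DifferentiableAt.fun_div ?_ ?_ h1 <;> fun_prop
  · intro K hK
    have h1 := (hlim K hK).norm.eventually_lt_const (lt_add_one _)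
    rw [eventually_nhdsWithin_iff, Metric.eventually_nhds_iff] at h1
    obtain ⟨δ, hδ, h1⟩ := h1
    have hη : 0 < δ / (1 + K) := by positivity
    have hlt : Real.exp (-(δ / (1 + K))) < 1 := by rw [Real.exp_lt_one_iff]; linarith
    refine ⟨(‖rrEps w‖ + 1) + (1 / (1 - Real.exp (-(δ / (1 + K)))) + 1 / δ), ?_, ?_⟩
    · have : 0 < 1 - Real.exp (-(δ / (1 + K))) := by linarith
      positivity
    intro t ht
    have hpos : 0 < 1 - Real.exp (-(δ / (1 + K))) := by linarith
    have hpos2 : 0 < 1 / (1 - Real.exp (-(δ / (1 + K)))) := by positivity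
    have hpos3 : 0 < 1 / δ := by positivity
    by_cases hd : ‖t‖ < δ
    · have := h1 (y := t) (by simpa [dist_eq_norm] using hd) ht
      linarith
    · push Not at hd
      have h2 := rrCone_norm ht
      have h3 : δ / (1 + K) ≤ t.re := by rw [div_le_iff₀ (by positivity)]; linarith
      have h4 : ‖w * Complex.exp (-t)‖ ≤ Real.exp (-(δ / (1 + K))) := by
        rw [norm_mul, hw, one_mul, Complex.norm_exp, Complex.neg_re]
        exact Real.exp_le_exp.mpr (by linarith)
      have h5 : 1 - Real.exp (-(δ / (1 + K))) ≤ ‖1 - w * Complex.exp (-t)‖ := by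
        have := norm_sub_norm_le (1 : ℂ) (w * Complex.exp (-t))
        rw [norm_one] at this
        linarith
      have h6 : ‖1 / (1 - w * Complex.exp (-t))‖ ≤ 1 / (1 - Real.exp (-(δ / (1 + K)))) := by
        rw [norm_div, norm_one]; exact one_div_le_one_div_of_le hpos h5
      have h7 : ‖(if w = 1 then 1 / t else 0 : ℂ)‖ ≤ 1 / δ := by
        split_ifs
        · rw [norm_div, norm_one]; exact one_div_le_one_div_of_le hδ hd
        · rw [norm_zero]; exact hpos3.le
      have h8 : ‖rrE w t‖ ≤ _ := norm_sub_le _ _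
      have := norm_nonneg (rrEps w)
      linarith


noncomputable def rrI (r : ℕ) : ℂ := if 5 ∣ r then 1 else 0

noncomputable def rrc (j : ℕ) : ℂ := rrI (1 + 2 * j) - rrI (2 + 2 * j) - rrI (3 + 2 * j) + rrI (4 + 2 * j)

lemma rrE_eq (r : ℕ) (t : ℂ) : rrE (rrz ^ r) t = 1 / (1 - rrz ^ r * Complex.exp (-t)) - rrI r / t := by
  rw [rrE, rrI]
  by_cases h : 5 ∣ r
  · rw [if_pos h, if_pos ((rrz_prim.pow_eq_one_iff_dvd r).mpr h)]
  · rw [if_neg h, if_neg (fun h' => h ((rrz_prim.pow_eq_one_iff_dvd r).mp h')), zero_div]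

lemma rrz_pow_mod (r : ℕ) : rrz ^ (r + 5) = rrz ^ r := by rw [pow_add, rrz5, mul_one]

lemma rrI_mod (r : ℕ) : rrI (r + 5) = rrI r := by
  simp [rrI]

lemma rrc_mod (j : ℕ) : rrc (j + 5) = rrc j := by
  simp only [rrc, rrI]
  congr 1
  · congr 1
    · congr 1
      · congr 1; exact propext ⟨fun h => by omega, fun h => by omega⟩
      · congr 1; exact propext ⟨fun h => by omega, fun h => by omega⟩
    · congr 1; exact propext ⟨fun h => by omega, fun h => by omega⟩
  · congr 1; exact propext ⟨fun h => by omega, fun h => by omega⟩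

lemma rrc_eq (j : ℕ) : rrc j * ((Real.sqrt 5 : ℝ) : ℂ) =
    -(rrz ^ j - (rrz ^ j) ^ 2 - (rrz ^ j) ^ 3 + (rrz ^ j) ^ 4) := by
  rw [← rrz_gauss]
  have h5 := rrz5
  induction j using Nat.strong_induction_on with
  | _ j ih =>
    by_cases hj : j < 5
    · interval_cases j
      · norm_num [rrc, rrI]
      · norm_num [rrc, rrI]
      · norm_num [rrc, rrI]
        linear_combination (-(rrz - rrz ^ 3)) * h5
      · norm_num [rrc, rrI]
        linear_combination (-(rrz - rrz ^ 2 * (rrz ^ 5 + 1) + rrz ^ 4)) * h5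
      · norm_num [rrc, rrI]
        linear_combination (-rrz ^ 3 + rrz * (rrz ^ 10 + rrz ^ 5 + 1) - rrz ^ 2 * (rrz ^ 5 + 1)) * h5
    · obtain ⟨i, rfl⟩ : ∃ i, j = i + 5 := ⟨j - 5, by omega⟩
      rw [rrc_mod, rrz_pow_mod]
      exact ih i (by omega)

lemma rr_two_cos (j : ℕ) : rrz ^ j + (rrz ^ j) ^ 4 = ((2 * Real.cos (2 * Real.pi * j * (1 / 5)) : ℝ) : ℂ) := by
  have hz : rrz ^ j = Complex.exp ((2 * Real.pi * j * (1 / 5) : ℂ) * I) := by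
    rw [rrz, ← Complex.exp_nat_mul]; congr 1; ring
  have h4 : (rrz ^ j) ^ 4 = Complex.exp (-(2 * Real.pi * j * (1 / 5) : ℂ) * I) := by
    have h : rrz ^ j * Complex.exp (-(2 * Real.pi * j * (1 / 5) : ℂ) * I) = 1 := by
      rw [hz, ← Complex.exp_add, ← add_mul, add_neg_cancel, zero_mul, Complex.exp_zero]
    have h5 : (rrz ^ j) ^ 5 = 1 := by rw [← pow_mul, mul_comm, pow_mul, rrz5, one_pow]
    linear_combination (Complex.exp (-(2 * Real.pi * j * (1 / 5) : ℂ) * I)) * h5 - (rrz ^ j) ^ 4 * h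
  rw [h4, hz]
  push_cast
  rw [Complex.cos]
  ring

lemma rr_L2 : HasSum (fun n : ℕ => rrc (n + 1) / ((n : ℂ) + 1) ^ 2)
    (-((4 * Real.pi ^ 2 / (25 * Real.sqrt 5) : ℝ) : ℂ)) := by
  have h1 := hasSum_one_div_nat_pow_mul_cos (k := 1) one_ne_zero (x := 1 / 5) ⟨by norm_num, by norm_num⟩
  have h2 := hasSum_one_div_nat_pow_mul_cos (k := 1) one_ne_zero (x := 2 / 5) ⟨by norm_num, by norm_num⟩
  have hb : ∀ x : ℝ, Polynomial.eval x (Polynomial.map (algebraMap ℚ ℝ) (Polynomial.bernoulli (2 * 1)))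
      = x ^ 2 - x + 1 / 6 := by
    intro x
    simp [Polynomial.bernoulli, Finset.sum_range_succ, bernoulli_two, bernoulli_one, Polynomial.eval_add]
    ring
  rw [hb] at h1 h2
  have h3 := Complex.hasSum_ofReal.mpr ((h1.sub h2).mul_left (-(2 / Real.sqrt 5)))
  rw [← hasSum_nat_add_iff' 1] at h3
  have hs5 : ((Real.sqrt 5 : ℝ) : ℂ) ≠ 0 := by
    rw [Complex.ofReal_ne_zero]; positivity
  have hv : ((-(2 / Real.sqrt 5) * ((-1) ^ (1 + 1) * (2 * Real.pi) ^ (2 * 1) / 2 / ((2 * 1).factorial : ℝ) *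
      ((1 / 5) ^ 2 - 1 / 5 + 1 / 6) - (-1) ^ (1 + 1) * (2 * Real.pi) ^ (2 * 1) / 2 / ((2 * 1).factorial : ℝ) *
      ((2 / 5) ^ 2 - 2 / 5 + 1 / 6)) : ℝ) : ℂ) = -((4 * Real.pi ^ 2 / (25 * Real.sqrt 5) : ℝ) : ℂ) := by
    rw [← Complex.ofReal_neg]; congr 1
    norm_num [Nat.factorial]
    field_simp
    norm_num
  rw [hv] at h3
  have h0 : ∀ X Y : ℝ, ((-(2 / Real.sqrt 5) * (1 / ((0 : ℕ) : ℝ) ^ (2 * 1) * X - 1 / ((0 : ℕ) : ℝ) ^ (2 * 1) * Y) : ℝ) : ℂ) = 0 := by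
    intro X Y; norm_num
  rw [Finset.sum_range_one, h0, sub_zero] at h3
  refine rr_hs_congr h3 (fun n => ?_)
  have e1 := rr_two_cos (n + 1)
  have e2 := rr_two_cos (2 * (n + 1))
  have e0 := rrc_eq (n + 1)
  have h5 : (rrz ^ (n + 1)) ^ 5 = 1 := by rw [← pow_mul, mul_comm, pow_mul, rrz5, one_pow]
  have e3 : rrz ^ (2 * (n + 1)) = (rrz ^ (n + 1)) ^ 2 := by rw [← pow_mul, mul_comm]
  rw [e3] at e2
  have e4 : (rrz ^ (n + 1)) ^ 2 + (rrz ^ (n + 1)) ^ 3 =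
      ((2 * Real.cos (2 * Real.pi * ((n + 1 : ℕ) : ℝ) * (2 / 5)) : ℝ) : ℂ) := by
    rw [show (2 * Real.pi * ((n + 1 : ℕ) : ℝ) * (2 / 5)) = 2 * Real.pi * ((2 * (n + 1) : ℕ) : ℝ) * (1 / 5) by
      push_cast; ring]
    rw [← e2]
    linear_combination (-(rrz ^ (n + 1)) ^ 3) * h5
  have e5 : rrc (n + 1) = -(((2 * Real.cos (2 * Real.pi * ((n + 1 : ℕ) : ℝ) * (1 / 5)) : ℝ) : ℂ) -
      ((2 * Real.cos (2 * Real.pi * ((n + 1 : ℕ) : ℝ) * (2 / 5)) : ℝ) : ℂ)) / ((Real.sqrt 5 : ℝ) : ℂ) := by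
    rw [eq_div_iff hs5, e0, ← e1, ← e4]; ring
  rw [e5]
  set X := Real.cos (2 * Real.pi * ((n + 1 : ℕ) : ℝ) * (1 / 5))
  set Y := Real.cos (2 * Real.pi * ((n + 1 : ℕ) : ℝ) * (2 / 5))
  have hn : ((n : ℂ) + 1) ≠ 0 := by exact_mod_cast Nat.succ_ne_zero n
  push_cast
  field_simp


noncomputable def rrH (c : ℝ) : ℂ := ∑' m : ℕ, (1 / ((5 * (m : ℝ) + c : ℝ) : ℂ) - 1 / ((5 * (m : ℝ) + 5 : ℝ) : ℂ))

lemma rr_const_good (d : ℂ) : rrGood (fun _ => d) d where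
  diff := fun _ _ => differentiableAt_const d
  bdd := fun _ _ => ⟨‖d‖, norm_nonneg _, fun _ _ => le_rfl⟩
  lim := fun _ _ => tendsto_const_nhds

lemma rrH_summable (c : ℝ) (hc : 1 ≤ c) (hc5 : c ≤ 5) :
    Summable (fun m : ℕ => (1 / ((5 * (m : ℝ) + c : ℝ) : ℂ) - 1 / ((5 * (m : ℝ) + 5 : ℝ) : ℂ))) :=
  ((rr_const_good 1).tannery (K := 1) zero_le_one c hc hc5).1 1 (by simp [rrCone])

lemma rrH_mul (d : ℂ) (c : ℝ) :
    (∑' m : ℕ, (d / ((5 * (m : ℝ) + c : ℝ) : ℂ) - d / ((5 * (m : ℝ) + 5 : ℝ) : ℂ))) = d * rrH c := by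
  rw [rrH, ← tsum_mul_left]
  congr 1; funext m; ring

lemma rrH5 : rrH 5 = 0 := by
  simp [rrH]

lemma rr_mem_compl (x : ℝ) (h0 : 0 < x) (h1 : x < 1) : (x : ℂ) ∈ Complex.integerComplement := by
  rw [Complex.mem_integerComplement_iff]
  rintro ⟨n, hn⟩
  have : (n : ℝ) = x := by exact_mod_cast hn
  rw [← this] at h0 h1
  have a : (0 : ℤ) < n := by exact_mod_cast h0
  have b : n < (1 : ℤ) := by exact_mod_cast h1
  omega

lemma rrH_sub (c : ℝ) (hc : 1 ≤ c) (hc4 : c ≤ 4) :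
    rrH c - rrH (5 - c) = Real.pi / 5 * Complex.cot (Real.pi * ((c / 5 : ℝ) : ℂ)) := by
  have hx := rr_mem_compl (c / 5) (by linarith) (by linarith)
  have hs1 := rrH_summable c hc (by linarith)
  have hs2 := rrH_summable (5 - c) (by linarith) (by linarith)
  have hs := (hs1.hasSum.sub hs2.hasSum).tendsto_sum_nat
  have ht := tendsto_logDeriv_euler_cot_sub hx
  have hz : Tendsto (fun N : ℕ => 1 / (5 * (N : ℂ) + c)) atTop (𝓝 0) := by
    have h := ((tendsto_natCast_atTop_atTop (R := ℝ)).const_mul_atTop (by norm_num : (0:ℝ) < 5))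
    have h2 := (tendsto_atTop_add_const_right atTop c h).inv_tendsto_atTop
    have h3 := (Complex.continuous_ofReal.tendsto 0).comp h2
    rw [Complex.ofReal_zero] at h3
    refine h3.congr (fun N => ?_)
    simp
  have hlim := ((ht.const_mul (1 / 5)).const_add (1 / (c : ℂ))).sub hz
  refine tendsto_nhds_unique hs ?_
  have hc0 : (c : ℂ) ≠ 0 := by exact_mod_cast (by linarith : c ≠ 0)
  have e : 1 / (c : ℂ) + 1 / 5 * (Real.pi * Complex.cot (Real.pi * ((c / 5 : ℝ) : ℂ)) - 1 / ((c / 5 : ℝ) : ℂ)) - 0 =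
      Real.pi / 5 * Complex.cot (Real.pi * ((c / 5 : ℝ) : ℂ)) := by
    push_cast
    field_simp
    ring
  rw [e] at hlim
  refine hlim.congr (fun N => ?_)
  induction N with
  | zero => simp
  | succ N ih =>
    rw [Finset.sum_range_succ, Finset.sum_range_succ, ← ih]
    have hN : (0 : ℝ) ≤ N := Nat.cast_nonneg N
    have k1 : (5 * (N : ℂ) + c) ≠ 0 := by exact_mod_cast (by linarith : 5 * (N : ℝ) + c ≠ 0)
    have k2 : (5 * ((N : ℂ) + 1) + c) ≠ 0 := by exact_mod_cast (by linarith : 5 * ((N : ℝ) + 1) + c ≠ 0)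
    have k3 : (5 * (N : ℂ) + (5 - c)) ≠ 0 := by exact_mod_cast (by linarith : 5 * (N : ℝ) + (5 - c) ≠ 0)
    have t1 : 1 / ((c / 5 : ℂ) - ((N : ℂ) + 1)) = - 5 / (5 * (N : ℂ) + (5 - c)) := by
      rw [div_eq_div_iff (by intro h; apply k3; linear_combination -5 * h) k3]; ring
    have t2 : 1 / ((c / 5 : ℂ) + ((N : ℂ) + 1)) = 5 / (5 * ((N : ℂ) + 1) + c) := by
      rw [div_eq_div_iff (by intro h; apply k2; linear_combination 5 * h) k2]; ring
    push_cast
    rw [cotTerm, t1, t2]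
    ring

noncomputable def rrep (r : ℕ) : ℂ := rrEps (rrz ^ r)

lemma rrep_mod (r : ℕ) : rrep (r + 5) = rrep r := by rw [rrep, rrz_pow_mod, rrep]

lemma rrep_zero : rrep 0 = 1 / 2 := by simp [rrep, rrEps]

lemma rrz_pow_ne (r : ℕ) (h0 : 0 < r) (h : r < 5) : rrz ^ r ≠ 1 := by
  intro h'
  have := (rrz_prim.pow_eq_one_iff_dvd r).mp h'
  omega

lemma rrz_inv {w : ℂ} (hw : w ≠ 1) (h : w ^ 5 = 1) : 1 / (1 - w) = (4 + 3 * w + 2 * w ^ 2 + w ^ 3) / 5 := by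
  have h1 : 1 - w ≠ 0 := sub_ne_zero.mpr (Ne.symm hw)
  have h2 : 1 + w + w ^ 2 + w ^ 3 + w ^ 4 = 0 := by
    have : (1 - w) * (1 + w + w ^ 2 + w ^ 3 + w ^ 4) = 0 := by linear_combination -h
    exact (mul_eq_zero.mp this).resolve_left h1
  rw [div_eq_div_iff h1 (by norm_num)]
  linear_combination h2

lemma rrep_val (r : ℕ) (h0 : 0 < r) (h : r < 5) :
    rrep r = (4 + 3 * rrz ^ r + 2 * (rrz ^ r) ^ 2 + (rrz ^ r) ^ 3) / 5 := by
  rw [rrep, rrEps, if_neg (rrz_pow_ne r h0 h), rrz_inv (rrz_pow_ne r h0 h)]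
  rw [← pow_mul, mul_comm, pow_mul, rrz5, one_pow]

lemma rr_cot_val (r : ℕ) (h0 : 0 < r) (h : r < 5) :
    Complex.cot (Real.pi * (((r : ℝ) / 5 : ℝ) : ℂ)) = -I * (2 * rrep r - 1) := by
  rw [Complex.cot_eq_exp_ratio]
  have : Complex.exp (2 * I * (Real.pi * (((r : ℝ) / 5 : ℝ) : ℂ))) = rrz ^ r := by
    rw [rrz, ← Complex.exp_nat_mul]; congr 1; push_cast; ring
  have h1 : 1 - rrz ^ r ≠ 0 := sub_ne_zero.mpr (Ne.symm (rrz_pow_ne r h0 h))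
  rw [this, rrep, rrEps, if_neg (rrz_pow_ne r h0 h), div_eq_iff (mul_ne_zero I_ne_zero h1)]
  have h2 : (1 / (1 - rrz ^ r)) * (1 - rrz ^ r) = 1 := by field_simp
  linear_combination (2 * (1 / (1 - rrz ^ r)) * (1 - rrz ^ r) - (1 - rrz ^ r)) * I_sq - 2 * h2

noncomputable def rrdel (j : ℕ) : ℂ := rrep (1 + 2 * j) - rrep (2 + 2 * j) - rrep (3 + 2 * j) + rrep (4 + 2 * j)

lemma rr_D : ∑ a ∈ Finset.range 5, rrdel (a + 1) * rrH ((a : ℝ) + 1) = 3 * Real.sqrt 5 * Real.pi * I / 25 := by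
  have e1 := rrep_val 1 (by norm_num) (by norm_num)
  have e2 := rrep_val 2 (by norm_num) (by norm_num)
  have e3 := rrep_val 3 (by norm_num) (by norm_num)
  have e4 := rrep_val 4 (by norm_num) (by norm_num)
  have e5 : rrep 5 = 1 / 2 := by rw [rrep_mod 0, rrep_zero]
  have e6 : rrep 6 = rrep 1 := rrep_mod 1
  have e7 : rrep 7 = rrep 2 := rrep_mod 2
  have e8 : rrep 8 = rrep 3 := rrep_mod 3
  have e9 : rrep 9 = rrep 4 := rrep_mod 4
  have e10 : rrep 10 = 1 / 2 := by rw [rrep_mod 5, e5]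
  have e11 : rrep 11 = rrep 1 := by rw [rrep_mod 6, e6]
  have e12 : rrep 12 = rrep 2 := by rw [rrep_mod 7, e7]
  have e13 : rrep 13 = rrep 3 := by rw [rrep_mod 8, e8]
  have e14 : rrep 14 = rrep 4 := by rw [rrep_mod 9, e9]
  have h14 : rrep 1 + rrep 4 = 1 := by
    rw [e1, e4]
    linear_combination (3 / 5 : ℂ) * rrz_sum + (1 / 5 : ℂ) * (rrz ^ 7 + rrz ^ 2 + 2 * rrz ^ 3) * rrz5
  have h23 : rrep 2 + rrep 3 = 1 := by
    rw [e2, e3]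
    linear_combination (3 / 5 : ℂ) * rrz_sum + (1 / 5 : ℂ) * (rrz ^ 4 + rrz + 2 * rrz) * rrz5
  have k1 := rrH_sub 1 (by norm_num) (by norm_num)
  have k2 := rrH_sub 2 (by norm_num) (by norm_num)
  have c1 := rr_cot_val 1 (by norm_num) (by norm_num)
  have c2 := rr_cot_val 2 (by norm_num) (by norm_num)
  norm_num at c1 c2
  norm_num at k1 k2
  rw [c1] at k1
  rw [c2] at k2
  have hq : (2 * rrep 1 - 1) ^ 2 - (2 * rrep 1 - 1) * (2 * rrep 2 - 1) - (2 * rrep 2 - 1) ^ 2 =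
      - (3 / 5) * ((Real.sqrt 5 : ℝ) : ℂ) := by
    rw [← rrz_gauss, e1, e2]
    linear_combination (1 / 25 : ℂ) * (-9 + 42 * rrz - 54 * rrz ^ 2 + 24 * rrz ^ 3 - 44 * rrz ^ 4 + 12 * rrz ^ 5
      - 16 * rrz ^ 6 + 4 * rrz ^ 7 - 4 * rrz ^ 8) * rrz_sum
  simp only [Finset.sum_range_succ, Finset.sum_range_zero, rrdel]
  norm_num
  rw [rrH5, e5, e6, e7, e8, e9, e10, e11, e12]
  have h4 : rrep 4 = 1 - rrep 1 := by linear_combination h14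
  have h3 : rrep 3 = 1 - rrep 2 := by linear_combination h23
  rw [h3, h4]
  have kk1 : rrH 4 = rrH 1 - Real.pi / 5 * (-(I * (2 * rrep 1 - 1))) := by linear_combination -k1
  have kk2 : rrH 3 = rrH 2 - Real.pi / 5 * (-(I * (2 * rrep 2 - 1))) := by linear_combination -k2
  rw [kk1, kk2]
  linear_combination (-I * Real.pi / 5) * hq


lemma rrGood.add {k l : ℂ → ℂ} {d e : ℂ} (h : rrGood k d) (h' : rrGood l e) : rrGood (fun t => k t + l t) (d + e) where
  diff := fun t ht => (h.diff t ht).fun_add (h'.diff t ht)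
  bdd := fun K hK => by
    obtain ⟨C, hC, hb⟩ := h.bdd K hK
    obtain ⟨C', hC', hb'⟩ := h'.bdd K hK
    exact ⟨C + C', by positivity, fun t ht => (norm_add_le _ _).trans (add_le_add (hb t ht) (hb' t ht))⟩
  lim := fun K hK => (h.lim K hK).add (h'.lim K hK)

lemma rrGood.sub {k l : ℂ → ℂ} {d e : ℂ} (h : rrGood k d) (h' : rrGood l e) : rrGood (fun t => k t - l t) (d - e) where
  diff := fun t ht => (h.diff t ht).fun_sub (h'.diff t ht)
  bdd := fun K hK => by
    obtain ⟨C, hC, hb⟩ := h.bdd K hK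
    obtain ⟨C', hC', hb'⟩ := h'.bdd K hK
    exact ⟨C + C', by positivity, fun t ht => (norm_sub_le _ _).trans (add_le_add (hb t ht) (hb' t ht))⟩
  lim := fun K hK => (h.lim K hK).sub (h'.lim K hK)

noncomputable def rrk (j : ℕ) (t : ℂ) : ℂ := rrE (rrz ^ (1 + 2 * j)) t - rrE (rrz ^ (2 + 2 * j)) t
  - rrE (rrz ^ (3 + 2 * j)) t + rrE (rrz ^ (4 + 2 * j)) t

lemma rrk_good (j : ℕ) : rrGood (rrk j) (rrdel j) :=
  (((rrE_good (rrz_pow_norm _)).sub (rrE_good (rrz_pow_norm _))).sub (rrE_good (rrz_pow_norm _))).add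
    (rrE_good (rrz_pow_norm _))

lemma rrk_mod (j : ℕ) (t : ℂ) : rrk (j + 5) t = rrk j t := by
  have h : ∀ b, rrz ^ (b + 2 * (j + 5)) = rrz ^ (b + 2 * j) := by
    intro b
    rw [show b + 2 * (j + 5) = (b + 2 * j + 5) + 5 by ring, rrz_pow_mod, rrz_pow_mod]
  simp only [rrk, h]

lemma rrk_mod' (m j : ℕ) (t : ℂ) : rrk (5 * m + j) t = rrk j t := by
  induction m with
  | zero => simp
  | succ m ih => rw [show 5 * (m + 1) + j = (5 * m + j) + 5 by ring, rrk_mod, ih]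

lemma rrk_sum (t : ℂ) : rrk 1 t + rrk 2 t + rrk 3 t + rrk 4 t + rrk 5 t = 0 := by
  have h : ∀ r, rrE (rrz ^ (r + 5)) t = rrE (rrz ^ r) t := fun r => by rw [rrz_pow_mod]
  simp only [rrk]
  norm_num
  rw [h 9, h 8, h 7, h 6, h 5, h 4, h 3, h 2, h 1]
  ring

noncomputable def rrbr (s : ℂ) (a m : ℕ) : ℂ :=
  rrk (a + 1) ((5 * (m : ℝ) + ((a : ℝ) + 1) : ℝ) * s) / ((5 * (m : ℝ) + ((a : ℝ) + 1) : ℝ) : ℂ)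
      - rrk (a + 1) ((5 * (m : ℝ) + 5 : ℝ) * s) / ((5 * (m : ℝ) + 5 : ℝ) : ℂ)

lemma rr_a_le {a : ℕ} (ha : a ∈ Finset.range 5) : (a : ℝ) + 1 ≤ 5 := by
  have : a + 1 ≤ 5 := by rw [Finset.mem_range] at ha; omega
  exact_mod_cast this

lemma rr_W {K : ℝ} (hK : 0 ≤ K) {s : ℂ} (hs : s ∈ rrCone K)
    (hg : Summable (fun n : ℕ => rrk (n + 1) (((n : ℂ) + 1) * s) / ((n : ℂ) + 1))) :
    ∑' n : ℕ, rrk (n + 1) (((n : ℂ) + 1) * s) / ((n : ℂ) + 1) =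
      ∑ a ∈ Finset.range 5, ∑' m : ℕ, rrbr s a m := by
  have h1 := hg.hasSum.tendsto_sum_nat
  have h1' := h1.comp (tendsto_id.const_mul_atTop' (by norm_num : 0 < 5) : Tendsto (fun M : ℕ => 5 * id M) atTop atTop)
  have h2 : HasSum (fun m => ∑ a ∈ Finset.range 5, rrbr s a m) (∑ a ∈ Finset.range 5, ∑' m : ℕ, rrbr s a m) := by
    refine hasSum_sum (fun a ha => Summable.hasSum ?_)
    exact ((rrk_good (a + 1)).tannery hK ((a : ℝ) + 1) (by linarith [(Nat.cast_nonneg a : (0:ℝ) ≤ a)]) (rr_a_le ha)).1 s hs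
  refine tendsto_nhds_unique h1' (h2.tendsto_sum_nat.congr (fun M => ?_))
  simp only [Function.comp, id]
  induction M with
  | zero => simp
  | succ M ih =>
    rw [Finset.sum_range_succ, ih, show 5 * (M + 1) = 5 * M + 1 + 1 + 1 + 1 + 1 by ring]
    simp only [Finset.sum_range_succ _ (5 * M + _), Finset.sum_range_succ _ (5 * M)]
    rw [add_assoc, add_assoc, add_assoc, add_assoc]
    congr 1
    simp only [Finset.sum_range_succ, Finset.sum_range_zero, rrbr]
    have e := rrk_sum ((5 * (M : ℝ) + 5 : ℝ) * s)
    simp only [add_assoc]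
    simp only [rrk_mod']
    push_cast
    norm_num
    push_cast at e
    have e2 : rrk 5 ((5 * (M : ℂ) + 5) * s) = - (rrk 1 ((5 * (M : ℂ) + 5) * s) + rrk 2 ((5 * (M : ℂ) + 5) * s) +
      rrk 3 ((5 * (M : ℂ) + 5) * s) + rrk 4 ((5 * (M : ℂ) + 5) * s)) := by linear_combination e
    have a1 : 5 * (M : ℂ) + 1 + 1 = 5 * M + 2 := by ring
    have a2 : 5 * (M : ℂ) + 2 + 1 = 5 * M + 3 := by ring
    have a3 : 5 * (M : ℂ) + 3 + 1 = 5 * M + 4 := by ring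
    have a4 : 5 * (M : ℂ) + 4 + 1 = 5 * M + 5 := by ring
    rw [a1, a2, a3, a4, e2]
    ring

lemma rr_main {K : ℝ} (hK : 0 ≤ K) : Tendsto (fun s : ℂ => rrG (rrz ^ 2 * Complex.exp (-s)) - ((4 * Real.pi ^ 2 / 125 : ℝ) : ℂ) / s)
    (𝓝[rrCone K] 0) (𝓝 (- (3 * Real.pi * I / 25))) := by
  have hs5 : ((Real.sqrt 5 : ℝ) : ℂ) ≠ 0 := by
    rw [Complex.ofReal_ne_zero]; positivity
  have hlim : Tendsto (fun s : ℂ => ∑ a ∈ Finset.range 5, ∑' m : ℕ, rrbr s a m) (𝓝[rrCone K] 0)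
      (𝓝 (∑ a ∈ Finset.range 5, rrdel (a + 1) * rrH ((a : ℝ) + 1))) := by
    refine tendsto_finsetSum _ (fun a ha => ?_)
    rw [← rrH_mul]
    exact ((rrk_good (a + 1)).tannery hK ((a : ℝ) + 1) (by linarith [(Nat.cast_nonneg a : (0:ℝ) ≤ a)]) (rr_a_le ha)).2
  rw [rr_D] at hlim
  have h2 := hlim.const_mul (- (1 / ((Real.sqrt 5 : ℝ) : ℂ)))
  have e : - (1 / ((Real.sqrt 5 : ℝ) : ℂ)) * (3 * Real.sqrt 5 * Real.pi * I / 25) = - (3 * Real.pi * I / 25) := by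
    field_simp
  rw [e] at h2
  refine h2.congr' ?_
  filter_upwards [self_mem_nhdsWithin] with s hs
  have hs0 : s ≠ 0 := by
    intro h; rw [h] at hs; exact absurd hs.1 (by simp)
  have hq : ‖rrz ^ 2 * Complex.exp (-s)‖ < 1 := rr_exp_lt (rrz_pow_norm 2) hs.1
  have hsum := (rr_prod _ hq).2
  have hterm : ∀ n : ℕ, rrk (n + 1) (((n : ℂ) + 1) * s) / ((n : ℂ) + 1) =
      ((Real.sqrt 5 : ℝ) : ℂ) * (rrP ((rrz ^ 2 * Complex.exp (-s)) ^ (n + 1)) / ((n : ℂ) + 1))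
        - (1 / s) * (rrc (n + 1) / ((n : ℂ) + 1) ^ 2) := by
    intro n
    have hn : ((n : ℂ) + 1) ≠ 0 := by exact_mod_cast Nat.succ_ne_zero n
    have hx : ‖(rrz ^ 2 * Complex.exp (-s)) ^ (n + 1)‖ < 1 := by
      rw [norm_pow]; exact pow_lt_one₀ (norm_nonneg _) hq (Nat.succ_ne_zero n)
    have hp := rrP_pf hx
    have hx2 : ∀ b, rrz ^ b * (rrz ^ 2 * Complex.exp (-s)) ^ (n + 1) =
        rrz ^ (b + 2 * (n + 1)) * Complex.exp (-(((n : ℂ) + 1) * s)) := by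
      intro b
      rw [mul_pow, ← Complex.exp_nat_mul, ← pow_mul, pow_add]
      push_cast
      ring_nf
    rw [show rrz * (rrz ^ 2 * Complex.exp (-s)) ^ (n + 1) = rrz ^ 1 * (rrz ^ 2 * Complex.exp (-s)) ^ (n + 1) by
      rw [pow_one], hx2, hx2, hx2, hx2] at hp
    rw [← mul_div_assoc, hp, rrk, rrc, rrE_eq, rrE_eq, rrE_eq, rrE_eq]
    field_simp
    ring
  have hr := rr_L2.mul_left (1 / s)
  have hg := (hsum.mul_left ((Real.sqrt 5 : ℝ) : ℂ)).hasSum.sub hr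
  have hg' := rr_hs_congr hg hterm
  rw [← rr_W hK hs hg'.summable, hg'.tsum_eq, tsum_mul_left, rrG]
  set T := ∑' n : ℕ, rrP ((rrz ^ 2 * Complex.exp (-s)) ^ (n + 1)) / ((n : ℂ) + 1)
  have h5 := rr_sqrt5_sq
  push_cast
  field_simp
  rw [h5]
  ring


lemma rr_G_conj (q : ℂ) : rrG ((starRingEnd ℂ) q) = (starRingEnd ℂ) (rrG q) := by
  simp only [rrG, map_neg, Complex.conj_tsum, rrP]
  simp

noncomputable def rrint (n : ℕ) (σ φ : ℝ) : ℂ := Complex.exp (rrG (Complex.exp (-(σ : ℂ) + φ * I)) + n * ((σ : ℂ) - φ * I))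

lemma rrint_conj (n : ℕ) (σ φ : ℝ) : rrint n σ (-φ) = (starRingEnd ℂ) (rrint n σ φ) := by
  rw [rrint, rrint, ← Complex.exp_conj]
  congr 1
  simp only [map_add, map_mul, map_sub, map_neg, ← rr_G_conj, ← Complex.exp_conj, Complex.conj_ofReal, Complex.conj_I,
    Complex.conj_natCast]
  push_cast
  ring_nf

lemma rr_int_exp (m : ℤ) (hm : m ≠ 0) : ∫ φ in (-Real.pi)..Real.pi, Complex.exp ((m * I : ℂ) * φ) = 0 := by
  rw [integral_exp_mul_complex (mul_ne_zero (by exact_mod_cast hm) I_ne_zero)]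
  have : Complex.exp (m * I * (Real.pi : ℝ)) = Complex.exp (m * I * ((-Real.pi : ℝ) : ℂ)) := by
    rw [Complex.exp_eq_exp_iff_exists_int]
    exact ⟨m, by push_cast; ring⟩
  rw [this, sub_self, zero_div]

lemma rr_coeff (C : ℕ → ℂ) (hC : ∀ q : ℂ, ‖q‖ < 1 → HasSum (fun n : ℕ => C n * q ^ n) (Complex.exp (rrG q)))
    (n : ℕ) (σ : ℝ) (hσ : 0 < σ) :
    Continuous (rrint n σ) ∧ C n = ((1 / Real.pi * (∫ φ in (0:ℝ)..Real.pi, rrint n σ φ).re : ℝ) : ℂ) := by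
  set f : ℕ → ℝ → ℂ := fun k φ => C k * Complex.exp (-(σ : ℂ) + φ * I) ^ k * Complex.exp (n * ((σ : ℂ) - φ * I)) with hf
  have hlt : Real.exp (-σ) < 1 := by
    rw [← Real.exp_zero]; exact Real.exp_lt_exp.mpr (by linarith)
  have hsum : ∀ φ : ℝ, HasSum (fun k => f k φ) (rrint n σ φ) := by
    intro φ
    rw [rrint, Complex.exp_add]
    exact (hC _ (by rw [rr_norm_exp]; exact hlt)).mul_right _
  have hcont : ∀ k, Continuous (f k) := by intro k; simp only [hf]; fun_prop
  have hnorm : ∀ k φ, ‖f k φ‖ = ‖C k‖ * Real.exp (-σ) ^ k * Real.exp (n * σ) := by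
    intro k φ
    simp only [hf]
    rw [norm_mul, norm_mul, norm_pow, rr_norm_exp, Complex.norm_exp]
    congr 2
    simp
  have hS : Summable (fun k => ‖C k‖ * Real.exp (-σ) ^ k * Real.exp (n * σ)) := by
    refine ((hsum 0).summable.norm).congr (fun k => hnorm k 0)
  have hcI : Continuous (rrint n σ) := by
    have : rrint n σ = fun φ => ∑' k, f k φ := funext fun φ => (hsum φ).tsum_eq.symm
    rw [this]
    exact continuous_tsum hcont hS (fun k φ => (hnorm k φ).le)
  refine ⟨hcI, ?_⟩
  have key := intervalIntegral.hasSum_integral_of_dominated_convergence (μ := MeasureTheory.volume)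
    (a := -Real.pi) (b := Real.pi) (F := f) (f := rrint n σ)
    (fun k _ => ‖C k‖ * Real.exp (-σ) ^ k * Real.exp (n * σ))
    (fun k => (hcont k).aestronglyMeasurable)
    (fun k => Eventually.of_forall fun φ _ => (hnorm k φ).le)
    (Eventually.of_forall fun φ _ => hS)
    intervalIntegrable_const
    (Eventually.of_forall fun φ _ => hsum φ)
  have hk : ∀ k : ℕ, ∀ φ : ℝ, f k φ = C k * Complex.exp ((n : ℂ) * σ - k * σ) * Complex.exp ((((k : ℤ) - (n : ℤ) : ℤ) * I : ℂ) * φ) := by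
    intro k φ
    simp only [hf]
    rw [← Complex.exp_nat_mul, mul_assoc, mul_assoc, ← Complex.exp_add, ← Complex.exp_add]
    congr 2
    push_cast
    ring
  have hint : ∀ k, k ≠ n → ∫ φ in (-Real.pi)..Real.pi, f k φ = 0 := by
    intro k hkn
    simp only [hk]
    rw [intervalIntegral.integral_const_mul, rr_int_exp _ (by omega), mul_zero]
  have hn : ∫ φ in (-Real.pi)..Real.pi, f n φ = C n * (2 * Real.pi) := by
    simp only [hk]
    simp
    ring
  have h1 := (hasSum_single n hint).unique key
  rw [hn, ← intervalIntegral.integral_add_adjacent_intervals (hcI.intervalIntegrable _ 0) (hcI.intervalIntegrable 0 _)] at h1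
  have h2 : ∫ φ in (-Real.pi)..0, rrint n σ φ = (starRingEnd ℂ) (∫ φ in (0:ℝ)..Real.pi, rrint n σ φ) := by
    rw [← intervalIntegral.intervalIntegral_conj]
    have := intervalIntegral.integral_comp_neg (a := 0) (b := Real.pi) (rrint n σ)
    rw [neg_zero] at this
    rw [← this]
    simp only [rrint_conj]
  rw [h2, add_comm, Complex.add_conj] at h1
  have hp : (Real.pi : ℂ) ≠ 0 := by exact_mod_cast Real.pi_ne_zero
  push_cast at h1 ⊢
  field_simp
  linear_combination h1 / 2


noncomputable def rrA : ℝ := 4 * Real.pi ^ 2 / 125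

lemma rrA_pos : 0 < rrA := by rw [rrA]; positivity

noncomputable def rrR (s : ℂ) : ℂ := rrG (rrz ^ 2 * Complex.exp (-s)) - (rrA : ℂ) / s

noncomputable def rrs (σ l v : ℝ) : ℂ := σ * (1 - (v / Real.sqrt l : ℝ) * I)

lemma rr_one_sub_I (u : ℝ) : (1 - (u : ℂ) * I) ≠ 0 := by
  intro h
  have := congrArg Complex.re h
  simp at this

lemma rr_L1 (n : ℕ) (σ l v : ℝ) (hσ : 0 < σ) (hl : 0 < l) (h1 : n * σ = l) (h2 : rrA = l * σ) :
    rrint n σ (4 * Real.pi / 5 + σ / Real.sqrt l * v) * Complex.exp (-2 * l + 4 * Real.pi / 5 * n * I) =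
      Complex.exp (rrR (rrs σ l v) - (v : ℂ) ^ 2 / (1 - (v / Real.sqrt l : ℝ) * I)) := by
  set u : ℝ := v / Real.sqrt l with hu
  have hsq : Real.sqrt l ≠ 0 := by positivity
  have hv : v = u * Real.sqrt l := by rw [hu]; field_simp
  have hv2 : (v : ℂ) ^ 2 = u ^ 2 * l := by
    have : v ^ 2 = u ^ 2 * l := by rw [hv, mul_pow, Real.sq_sqrt hl.le]
    exact_mod_cast this
  have hu' : σ / Real.sqrt l * v = σ * u := by rw [hv]; field_simp
  have hD := rr_one_sub_I u
  have hσ' : (σ : ℂ) ≠ 0 := by exact_mod_cast hσ.ne'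
  have h1' : (n : ℂ) * σ = l := by exact_mod_cast h1
  have h2' : (rrA : ℂ) = l * σ := by exact_mod_cast h2
  rw [rrint, ← Complex.exp_add, hu', rrR, rrs, ← hu]
  have hq : Complex.exp (-(σ : ℂ) + (4 * Real.pi / 5 + σ * u : ℝ) * I) = rrz ^ 2 * Complex.exp (-(σ * (1 - (u : ℂ) * I))) := by
    rw [rrz, ← Complex.exp_nat_mul, ← Complex.exp_add]
    congr 1
    push_cast
    ring
  rw [hq, hv2, h2']
  congr 1
  have e : (l : ℂ) * σ / (σ * (1 - (u : ℂ) * I)) = l / (1 - (u : ℂ) * I) := by field_simp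
  rw [e]
  have e2 : (l : ℂ) * (1 - (u : ℂ) * I) - 2 * l + l / (1 - (u : ℂ) * I) + u ^ 2 * l / (1 - (u : ℂ) * I) = 0 := by
    field_simp
    linear_combination (l : ℂ) * (u : ℂ) ^ 2 * I_sq
  push_cast
  linear_combination (1 - (u : ℂ) * I) * h1' + e2

noncomputable def rrsg (n : ℕ) : ℝ := Real.sqrt (rrA / n)
noncomputable def rrl (n : ℕ) : ℝ := Real.sqrt (rrA * n)

lemma rrsg_pos {n : ℕ} (hn : 0 < n) : 0 < rrsg n := by
  have := rrA_pos
  have hn' : (0:ℝ) < n := by exact_mod_cast hn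
  rw [rrsg]; positivity

lemma rrl_pos {n : ℕ} (hn : 0 < n) : 0 < rrl n := by
  have := rrA_pos
  have hn' : (0:ℝ) < n := by exact_mod_cast hn
  rw [rrl]; positivity

lemma rr_nsg {n : ℕ} (hn : 0 < n) : n * rrsg n = rrl n := by
  have := rrA_pos
  have hn' : (0:ℝ) < n := by exact_mod_cast hn
  rw [rrsg, rrl]
  symm
  rw [Real.sqrt_eq_iff_mul_self_eq (by positivity) (by positivity)]
  have h := Real.mul_self_sqrt (show 0 ≤ rrA / n by positivity)
  have h2 : (n : ℝ) * (rrA / n) = rrA := by field_simp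
  first
  | linear_combination (n : ℝ) ^ 2 * h + (n : ℝ) * h2
  | linear_combination -(n : ℝ) ^ 2 * h - (n : ℝ) * h2

lemma rr_Asg {n : ℕ} (hn : 0 < n) : rrA = rrl n * rrsg n := by
  rw [← rr_nsg hn]
  have := rrA_pos
  have hn' : (0:ℝ) < n := by exact_mod_cast hn
  have h := Real.mul_self_sqrt (show 0 ≤ rrA / n by positivity)
  rw [mul_assoc, rrsg, h]; field_simp

lemma rrl_tendsto : Tendsto rrl atTop atTop := by
  refine Real.tendsto_sqrt_atTop.comp ?_
  exact (tendsto_natCast_atTop_atTop (R := ℝ)).const_mul_atTop rrA_pos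

lemma rrsg_tendsto : Tendsto rrsg atTop (𝓝 0) := by
  have h : Tendsto (fun n : ℕ => rrA / (n : ℝ)) atTop (𝓝 0) := tendsto_const_div_atTop_nhds_zero_nat rrA
  have := (Real.continuous_sqrt.tendsto 0).comp h
  rw [Real.sqrt_zero] at this
  exact this

lemma rrs_cone {σ l v : ℝ} (hσ : 0 < σ) (hl : 0 < l) (hv : |v| ≤ 100 * Real.sqrt l) : rrs σ l v ∈ rrCone 100 := by
  have hsq : 0 < Real.sqrt l := by positivity
  have hu : |v / Real.sqrt l| ≤ 100 := by
    rw [abs_div, abs_of_pos hsq, div_le_iff₀ hsq]; exact hv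
  have e1 : (rrs σ l v).re = σ := by simp [rrs]
  have e2 : (rrs σ l v).im = -(σ * (v / Real.sqrt l)) := by simp [rrs]
  refine ⟨by rw [e1]; exact hσ, ?_⟩
  rw [e1, e2, abs_neg, abs_mul, abs_of_pos hσ]
  nlinarith

lemma rr_re_div (u w : ℝ) : ((w : ℂ) / (1 - (u : ℂ) * I)).re = w / (1 + u ^ 2) := by
  rw [Complex.div_re]
  simp [Complex.normSq_apply]
  ring

noncomputable def rrh (n : ℕ) (v : ℝ) : ℂ :=
  rrint n (rrsg n) (4 * Real.pi / 5 + rrsg n / Real.sqrt (rrl n) * v) * Complex.exp (-2 * rrl n + 4 * Real.pi / 5 * n * I)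

lemma rr_R_bdd : ∃ M δ : ℝ, 0 < δ ∧ ∀ s ∈ rrCone 100, ‖s‖ < δ → ‖rrR s‖ ≤ M := by
  have h := rr_main (K := 100) (by norm_num)
  have h2 := h.norm.eventually (gt_mem_nhds (lt_add_one _))
  rw [eventually_nhdsWithin_iff, Metric.eventually_nhds_iff] at h2
  obtain ⟨δ, hδ, h3⟩ := h2
  exact ⟨_, δ, hδ, fun s hs hsd => (h3 (by rwa [dist_zero_right]) hs).le⟩

lemma rr_L2main (hc : ∀ n σ, 0 < σ → Continuous (rrint n σ)) :
    Tendsto (fun n : ℕ => ∫ v in (-(100 * Real.sqrt (rrl n)))..(100 * Real.sqrt (rrl n)), rrh n v) atTop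
      (𝓝 (Complex.exp (-(3 * Real.pi * I / 25)) * Real.sqrt Real.pi)) := by
  obtain ⟨M, δ, hδ, hM⟩ := rr_R_bdd
  have hint : ∫ v : ℝ, Complex.exp (-(3 * Real.pi * I / 25)) * ((Real.exp (-1 * v ^ 2) : ℝ) : ℂ) =
      Complex.exp (-(3 * Real.pi * I / 25)) * Real.sqrt Real.pi := by
    rw [MeasureTheory.integral_const_mul, integral_complex_ofReal, integral_gaussian, div_one]
  rw [← hint]
  have e : ∀ n : ℕ, ∫ v in (-(100 * Real.sqrt (rrl n)))..(100 * Real.sqrt (rrl n)), rrh n v =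
      ∫ v, (Set.Ioc (-(100 * Real.sqrt (rrl n))) (100 * Real.sqrt (rrl n))).indicator (rrh n) v := by
    intro n
    rw [intervalIntegral.integral_of_le (by linarith [Real.sqrt_nonneg (rrl n)]),
      MeasureTheory.integral_indicator measurableSet_Ioc]
  simp only [e]
  refine MeasureTheory.tendsto_integral_filter_of_dominated_convergence
    (fun v => Real.exp M * Real.exp (-(1 / 10001) * v ^ 2)) ?_ ?_ ?_ ?_
  · filter_upwards [eventually_gt_atTop 0] with n hn
    refine Measurable.aestronglyMeasurable ?_
    refine Measurable.indicator ?_ measurableSet_Ioc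
    have := hc n _ (rrsg_pos hn)
    refine Continuous.measurable ?_
    unfold rrh
    fun_prop
  · have hs : ∀ᶠ n : ℕ in atTop, rrsg n < δ / 101 := rrsg_tendsto.eventually (gt_mem_nhds (by positivity))
    filter_upwards [eventually_gt_atTop 0, hs] with n hn hs
    refine Eventually.of_forall (fun v => ?_)
    by_cases hv : v ∈ Set.Ioc (-(100 * Real.sqrt (rrl n))) (100 * Real.sqrt (rrl n))
    · rw [Set.indicator_of_mem hv, rrh, rr_L1 n _ _ v (rrsg_pos hn) (rrl_pos hn) (rr_nsg hn) (rr_Asg hn)]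
      have hv' : |v| ≤ 100 * Real.sqrt (rrl n) := abs_le.mpr ⟨hv.1.le, hv.2⟩
      have hcone := rrs_cone (rrsg_pos hn) (rrl_pos hn) hv'
      have hnm : ‖rrs (rrsg n) (rrl n) v‖ < δ := by
        have := rrCone_norm hcone
        have e1 : (rrs (rrsg n) (rrl n) v).re = rrsg n := by simp [rrs]
        rw [e1] at this
        linarith
      have hR := hM _ hcone hnm
      rw [Complex.norm_exp, ← Real.exp_add, Complex.sub_re, ← Complex.ofReal_pow, rr_re_div]
      apply Real.exp_le_exp.mpr
      have h1 := (Complex.re_le_norm (rrR (rrs (rrsg n) (rrl n) v))).trans hR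
      have hsq : 0 < Real.sqrt (rrl n) := Real.sqrt_pos.mpr (rrl_pos hn)
      have hu : |v / Real.sqrt (rrl n)| ≤ 100 := by
        rw [abs_div, abs_of_pos hsq, div_le_iff₀ hsq]; exact hv'
      have hu2 : (v / Real.sqrt (rrl n)) ^ 2 ≤ 10000 := by
        rw [← sq_abs]; nlinarith [abs_nonneg (v / Real.sqrt (rrl n))]
      have h3 : v ^ 2 / 10001 ≤ v ^ 2 / (1 + (v / Real.sqrt (rrl n)) ^ 2) := by
        gcongr
        linarith
      linarith
    · rw [Set.indicator_of_notMem hv, norm_zero]; positivity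
  · exact (integrable_exp_neg_mul_sq (by norm_num)).const_mul _
  · refine Eventually.of_forall (fun v => ?_)
    have hsq : Tendsto (fun n => Real.sqrt (rrl n)) atTop atTop := Real.tendsto_sqrt_atTop.comp rrl_tendsto
    have hu : Tendsto (fun n => v / Real.sqrt (rrl n)) atTop (𝓝 0) := hsq.const_div_atTop v
    have hu' : Tendsto (fun n => ((v / Real.sqrt (rrl n) : ℝ) : ℂ)) atTop (𝓝 0) := by
      have := (Complex.continuous_ofReal.tendsto 0).comp hu
      rwa [Complex.ofReal_zero] at this
    have hD : Tendsto (fun n => 1 - ((v / Real.sqrt (rrl n) : ℝ) : ℂ) * I) atTop (𝓝 1) := by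
      have := (hu'.mul_const I).const_sub 1
      simpa using this
    have hin : ∀ᶠ n : ℕ in atTop, |v| < 100 * Real.sqrt (rrl n) :=
      (hsq.const_mul_atTop (by norm_num : (0:ℝ) < 100)).eventually_gt_atTop _
    have hsc : Tendsto (fun n => rrs (rrsg n) (rrl n) v) atTop (𝓝[rrCone 100] 0) := by
      refine tendsto_nhdsWithin_iff.mpr ⟨?_, ?_⟩
      · have h0 : Tendsto (fun n => ((rrsg n : ℝ) : ℂ)) atTop (𝓝 0) := by
          have := (Complex.continuous_ofReal.tendsto 0).comp rrsg_tendsto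
          rwa [Complex.ofReal_zero] at this
        have := h0.mul hD
        rw [zero_mul] at this
        exact this
      · filter_upwards [eventually_gt_atTop 0, hin] with n hn h
        exact rrs_cone (rrsg_pos hn) (rrl_pos hn) h.le
    have hR := (rr_main (K := 100) (by norm_num)).comp hsc
    have hfin := (Complex.continuous_exp.tendsto _).comp (hR.sub ((tendsto_const_nhds (x := (v : ℂ) ^ 2)).div hD one_ne_zero))
    have e3 : Complex.exp (-(3 * Real.pi * I / 25) - (v : ℂ) ^ 2 / 1) =
        Complex.exp (-(3 * Real.pi * I / 25)) * ((Real.exp (-1 * v ^ 2) : ℝ) : ℂ) := by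
      rw [Complex.ofReal_exp, ← Complex.exp_add]; congr 1; push_cast; ring
    rw [e3] at hfin
    refine hfin.congr' ?_
    filter_upwards [eventually_gt_atTop 0, hin] with n hn h
    have hv : v ∈ Set.Ioc (-(100 * Real.sqrt (rrl n))) (100 * Real.sqrt (rrl n)) :=
      ⟨(abs_lt.mp h).1, (abs_lt.mp h).2.le⟩
    rw [Set.indicator_of_mem hv, rrh, rr_L1 n _ _ v (rrsg_pos hn) (rrl_pos hn) (rr_nsg hn) (rr_Asg hn)]
    rfl


lemma rr_L4 : Tendsto (fun n : ℕ => Real.sqrt (rrl n) / rrsg n * Real.exp (-(1 / (100 * rrsg n)))) atTop (𝓝 0) := by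
  have hA := rrA_pos
  have h1 := (Real.tendsto_pow_mul_exp_neg_atTop_nhds_zero 2).comp
    (rrl_tendsto.atTop_div_const (by positivity : 0 < 100 * rrA))
  have h2 := h1.const_mul (10000 * rrA)
  rw [mul_zero] at h2
  refine squeeze_zero' ?_ ?_ h2
  · filter_upwards [eventually_gt_atTop 0] with n hn
    have := rrsg_pos hn
    positivity
  · filter_upwards [eventually_gt_atTop 0, rrl_tendsto.eventually_ge_atTop 1] with n hn hl
    have hs := rrsg_pos hn
    have hl0 := rrl_pos hn
    have e := rr_Asg hn
    have e1 : 1 / rrsg n = rrl n / rrA := by rw [e]; field_simp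
    have e2 : 1 / (100 * rrsg n) = rrl n / (100 * rrA) := by rw [e]; field_simp
    rw [e2, div_eq_mul_one_div, e1]
    have h3 : Real.sqrt (rrl n) ≤ rrl n := by
      rw [Real.sqrt_le_left hl0.le]; nlinarith
    simp only [Function.comp]
    rw [← mul_assoc]
    apply mul_le_mul_of_nonneg_right _ (Real.exp_pos _).le
    calc Real.sqrt (rrl n) * (rrl n / rrA) ≤ rrl n * (rrl n / rrA) := by gcongr
      _ = _ := by field_simp; norm_num

lemma rr_L5 (hc : ∀ n σ, 0 < σ → Continuous (rrint n σ)) :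
    Tendsto (fun n : ℕ => ((Real.sqrt (rrl n) / rrsg n : ℝ) : ℂ) * Complex.exp (-2 * rrl n + 4 * Real.pi / 5 * n * I) *
      ∫ φ in (0:ℝ)..Real.pi, rrint n (rrsg n) φ) atTop
      (𝓝 (Complex.exp (-(3 * Real.pi * I / 25)) * Real.sqrt Real.pi)) := by
  obtain ⟨σ₀, hσ₀, hmin⟩ := rr_minor
  have hz : Tendsto (fun n : ℕ => ((Real.sqrt (rrl n) / rrsg n : ℝ) : ℂ) * Complex.exp (-2 * rrl n + 4 * Real.pi / 5 * n * I) *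
      (∫ φ in (0:ℝ)..Real.pi, rrint n (rrsg n) φ) -
      ∫ v in (-(100 * Real.sqrt (rrl n)))..(100 * Real.sqrt (rrl n)), rrh n v) atTop (𝓝 0) := by
    rw [tendsto_zero_iff_norm_tendsto_zero]
    have hL := rr_L4.const_mul (2 * Real.pi)
    rw [mul_zero] at hL
    refine squeeze_zero' (Eventually.of_forall fun n => norm_nonneg _) ?_ hL
    filter_upwards [eventually_gt_atTop 0, rrsg_tendsto.eventually (gt_mem_nhds hσ₀),
      rrsg_tendsto.eventually (gt_mem_nhds (by norm_num : (0:ℝ) < 1 / 1000))] with n hn hs1 hs2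
    set σ := rrsg n with hσd
    set l := rrl n with hld
    have hσ : 0 < σ := rrsg_pos hn
    have hl : 0 < l := rrl_pos hn
    have hsq : 0 < Real.sqrt l := Real.sqrt_pos.mpr hl
    have hcc := hc n σ hσ
    have hpi := Real.pi_gt_three
    have hbound : ∀ φ : ℝ, 0 ≤ φ → φ ≤ Real.pi → 100 * σ ≤ |φ - 4 * Real.pi / 5| →
        ‖rrint n σ φ‖ ≤ Real.exp (2 * l - 1 / (100 * σ)) := by
      intro φ h0 h1 h2
      have := hmin σ φ hσ hs1.le h0 h1 h2
      rw [rrint, Complex.norm_exp]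
      apply Real.exp_le_exp.mpr
      have e1 : (rrG (Complex.exp (-(σ : ℂ) + φ * I)) + n * ((σ : ℂ) - φ * I)).re =
        (rrG (Complex.exp (-(σ : ℂ) + φ * I))).re + n * σ := by simp
      rw [e1, rr_nsg hn]
      have e2 : (4 * Real.pi ^ 2 / 125 - 1 / 100) / σ = l - 1 / (100 * σ) := by
        have : 4 * Real.pi ^ 2 / 125 = l * σ := rr_Asg hn
        rw [this]; field_simp
      rw [e2] at this
      linarith
    have hi1 : ‖∫ φ in (0:ℝ)..(4 * Real.pi / 5 - 100 * σ), rrint n σ φ‖ ≤ Real.exp (2 * l - 1 / (100 * σ)) * Real.pi := by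
      refine (intervalIntegral.norm_integral_le_of_norm_le_const (C := Real.exp (2 * l - 1 / (100 * σ))) ?_).trans ?_
      · intro φ hφ
        rw [Set.uIoc_of_le (by linarith)] at hφ
        apply hbound φ hφ.1.le (by linarith [hφ.2])
        rw [abs_of_nonpos (by linarith [hφ.2])]
        linarith [hφ.2]
      · apply mul_le_mul_of_nonneg_left _ (Real.exp_pos _).le
        rw [abs_of_nonneg (by linarith)]; linarith
    have hi3 : ‖∫ φ in (4 * Real.pi / 5 + 100 * σ)..Real.pi, rrint n σ φ‖ ≤ Real.exp (2 * l - 1 / (100 * σ)) * Real.pi := by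
      refine (intervalIntegral.norm_integral_le_of_norm_le_const (C := Real.exp (2 * l - 1 / (100 * σ))) ?_).trans ?_
      · intro φ hφ
        rw [Set.uIoc_of_le (by linarith)] at hφ
        apply hbound φ (by linarith [hφ.1]) (by linarith [hφ.2])
        rw [abs_of_nonneg (by linarith [hφ.1])]
        linarith [hφ.1]
      · apply mul_le_mul_of_nonneg_left _ (Real.exp_pos _).le
        rw [abs_of_nonneg (by linarith)]; linarith
    have hsplit : (∫ φ in (0:ℝ)..Real.pi, rrint n σ φ) = (∫ φ in (0:ℝ)..(4 * Real.pi / 5 - 100 * σ), rrint n σ φ) +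
        (∫ φ in (4 * Real.pi / 5 - 100 * σ)..(4 * Real.pi / 5 + 100 * σ), rrint n σ φ) +
        (∫ φ in (4 * Real.pi / 5 + 100 * σ)..Real.pi, rrint n σ φ) := by
      rw [intervalIntegral.integral_add_adjacent_intervals (hcc.intervalIntegrable _ _) (hcc.intervalIntegrable _ _),
        intervalIntegral.integral_add_adjacent_intervals (hcc.intervalIntegrable _ _) (hcc.intervalIntegrable _ _)]
    have hsub := intervalIntegral.smul_integral_comp_add_mul (a := -(100 * Real.sqrt l)) (b := 100 * Real.sqrt l)
      (rrint n σ) (σ / Real.sqrt l) (4 * Real.pi / 5)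
    rw [show 4 * Real.pi / 5 + σ / Real.sqrt l * -(100 * Real.sqrt l) = 4 * Real.pi / 5 - 100 * σ by field_simp; ring,
      show 4 * Real.pi / 5 + σ / Real.sqrt l * (100 * Real.sqrt l) = 4 * Real.pi / 5 + 100 * σ by field_simp] at hsub
    have hh : ∫ v in (-(100 * Real.sqrt l))..(100 * Real.sqrt l), rrh n v =
      (∫ v in (-(100 * Real.sqrt l))..(100 * Real.sqrt l), rrint n σ (4 * Real.pi / 5 + σ / Real.sqrt l * v)) *
        Complex.exp (-2 * l + 4 * Real.pi / 5 * n * I) := by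
      rw [← intervalIntegral.integral_mul_const]; rfl
    rw [hsplit, hh, ← hsub, Complex.real_smul]
    set X := ∫ v in (-(100 * Real.sqrt l))..(100 * Real.sqrt l), rrint n σ (4 * Real.pi / 5 + σ / Real.sqrt l * v)
    set Y := ∫ φ in (0:ℝ)..(4 * Real.pi / 5 - 100 * σ), rrint n σ φ
    set Z := ∫ φ in (4 * Real.pi / 5 + 100 * σ)..Real.pi, rrint n σ φ
    set E := Complex.exp (-2 * l + 4 * Real.pi / 5 * n * I) with hE
    have hc1 : ((Real.sqrt l / σ : ℝ) : ℂ) * ((σ / Real.sqrt l : ℝ) : ℂ) = 1 := by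
      rw [← Complex.ofReal_mul, show Real.sqrt l / σ * (σ / Real.sqrt l) = 1 by field_simp, Complex.ofReal_one]
    have e3 : ((Real.sqrt l / σ : ℝ) : ℂ) * E * (Y + ((σ / Real.sqrt l : ℝ) : ℂ) * X + Z) - X * E =
        ((Real.sqrt l / σ : ℝ) : ℂ) * E * (Y + Z) := by linear_combination E * X * hc1
    rw [e3, norm_mul, norm_mul, Complex.norm_real, Real.norm_of_nonneg (by positivity)]
    have hEn : ‖E‖ = Real.exp (-2 * l) := by
      rw [hE, Complex.norm_exp]; congr 1; simp
    rw [hEn]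
    have hYZ : ‖Y + Z‖ ≤ 2 * (Real.exp (2 * l - 1 / (100 * σ)) * Real.pi) := by
      refine (norm_add_le _ _).trans ?_; linarith
    calc Real.sqrt l / σ * Real.exp (-2 * l) * ‖Y + Z‖
        ≤ Real.sqrt l / σ * Real.exp (-2 * l) * (2 * (Real.exp (2 * l - 1 / (100 * σ)) * Real.pi)) := by gcongr
      _ = 2 * Real.pi * (Real.sqrt l / σ * (Real.exp (-2 * l) * Real.exp (2 * l - 1 / (100 * σ)))) := by ring
      _ = _ := by rw [← Real.exp_add]; congr 3; ring
  have := hz.add (rr_L2main hc)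
  rw [zero_add] at this
  refine this.congr (fun n => by ring)


noncomputable def rrcos (n : ℕ) : ℝ := Real.cos (4 * Real.pi / 5 * ((n : ℝ) + 3 / 20))

lemma rrcos_mod (n : ℕ) : rrcos n = rrcos (n % 5) := by
  rw [rrcos, rrcos]
  conv_lhs => rw [← Nat.mod_add_div n 5]
  rw [← Real.cos_add_nat_mul_two_pi (4 * Real.pi / 5 * (((n % 5 : ℕ) : ℝ) + 3 / 20)) (2 * (n / 5))]
  congr 1
  push_cast
  ring

lemma rrcos_0 : 0 < rrcos 0 := by
  apply Real.cos_pos_of_mem_Ioo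
  have := Real.pi_pos
  constructor <;> push_cast <;> linarith

lemma rrcos_2 : 0 < rrcos 2 := by
  rw [rrcos, ← Real.cos_sub_two_pi]
  apply Real.cos_pos_of_mem_Ioo
  have := Real.pi_pos
  constructor <;> push_cast <;> linarith

lemma rrcos_1 : rrcos 1 < 0 := by
  have := Real.pi_pos
  apply Real.cos_neg_of_pi_div_two_lt_of_lt <;> push_cast <;> linarith

lemma rrcos_3 : rrcos 3 < 0 := by
  have := Real.pi_pos
  rw [rrcos, ← Real.cos_sub_two_pi]
  apply Real.cos_neg_of_pi_div_two_lt_of_lt <;> push_cast <;> linarith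

lemma rrcos_4 : rrcos 4 < 0 := by
  have := Real.pi_pos
  rw [rrcos, ← Real.cos_sub_two_pi]
  apply Real.cos_neg_of_pi_div_two_lt_of_lt <;> push_cast <;> linarith

lemma rrcos_pos {n : ℕ} (h : n % 5 = 0 ∨ n % 5 = 2) : 0 < rrcos n := by
  rw [rrcos_mod]
  rcases h with h | h <;> rw [h]
  · exact rrcos_0
  · exact rrcos_2

lemma rrcos_neg {n : ℕ} (h : n % 5 = 1 ∨ n % 5 = 3 ∨ n % 5 = 4) : rrcos n < 0 := by
  rw [rrcos_mod]
  rcases h with h | h | h <;> rw [h]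
  · exact rrcos_1
  · exact rrcos_3
  · exact rrcos_4

lemma rrcos_ne (n : ℕ) : rrcos n ≠ 0 := by
  have : (n % 5 = 0 ∨ n % 5 = 2) ∨ (n % 5 = 1 ∨ n % 5 = 3 ∨ n % 5 = 4) := by omega
  rcases this with h | h
  · exact (rrcos_pos h).ne'
  · exact (rrcos_neg h).ne

lemma rrcos_inv : ∃ M : ℝ, ∀ n, |1 / rrcos n| ≤ M := by
  refine ⟨∑ r ∈ Finset.range 5, |1 / rrcos r|, fun n => ?_⟩
  rw [rrcos_mod]
  exact Finset.single_le_sum (f := fun r => |1 / rrcos r|) (fun i _ => abs_nonneg _)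
    (Finset.mem_range.mpr (Nat.mod_lt n (by norm_num)))

noncomputable def rrkap (n : ℕ) : ℝ := rrsg n / Real.sqrt (rrl n) * Real.exp (2 * rrl n) / Real.sqrt Real.pi

lemma rrkap_pos {n : ℕ} (hn : 0 < n) : 0 < rrkap n := by
  have := rrsg_pos hn
  have := Real.sqrt_pos.mpr (rrl_pos hn)
  have := Real.pi_pos
  rw [rrkap]; positivity

lemma rrkap_eq {n : ℕ} (hn : 0 < n) : rrkap n = Real.sqrt 2 / (5 : ℝ) ^ ((3 : ℝ) / 4) *
    (n : ℝ) ^ (-(3 : ℝ) / 4) * Real.exp (4 * Real.pi / (5 * Real.sqrt 5) * Real.sqrt n) := by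
  have hn' : (0:ℝ) < n := by exact_mod_cast hn
  have hp := Real.pi_pos
  have hA : rrA = (2 * Real.pi) ^ 2 / 5 ^ 3 := by rw [rrA]; ring
  have hAs : Real.sqrt rrA = 2 * Real.pi / (5 * Real.sqrt 5) := by
    rw [hA, Real.sqrt_div (by positivity), Real.sqrt_sq (by positivity),
      show (5:ℝ) ^ 3 = 5 ^ 2 * 5 by norm_num, Real.sqrt_mul (by positivity), Real.sqrt_sq (by positivity)]
  have hl : 2 * rrl n = 4 * Real.pi / (5 * Real.sqrt 5) * Real.sqrt n := by
    rw [rrl, Real.sqrt_mul rrA_pos.le, hAs]; ring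
  have h1 : rrsg n / Real.sqrt (rrl n) = rrA ^ ((1:ℝ) / 4) * (n : ℝ) ^ (-(3 : ℝ) / 4) := by
    rw [rrsg, rrl, Real.sqrt_eq_rpow, Real.sqrt_eq_rpow, Real.sqrt_eq_rpow,
      ← Real.rpow_mul (mul_pos rrA_pos hn').le, Real.div_rpow rrA_pos.le hn'.le, Real.mul_rpow rrA_pos.le hn'.le,
      div_div, mul_comm ((n:ℝ) ^ _), mul_assoc, ← Real.rpow_add hn', ← div_div, ← Real.rpow_sub rrA_pos,
      div_eq_mul_inv, ← Real.rpow_neg hn'.le]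
    norm_num
  have h2 : rrA ^ ((1:ℝ) / 4) / Real.sqrt Real.pi = Real.sqrt 2 / (5 : ℝ) ^ ((3 : ℝ) / 4) := by
    rw [hA, Real.div_rpow (by positivity) (by positivity), ← Real.rpow_natCast, ← Real.rpow_natCast,
      ← Real.rpow_mul (by positivity), ← Real.rpow_mul (by positivity)]
    norm_num
    rw [show (1:ℝ) / 2 = 1 / 2 by rfl, ← Real.sqrt_eq_rpow, Real.sqrt_mul (by norm_num)]
    field_simp
  rw [rrkap, h1, hl, ← h2]
  ring

lemma rrkap_ratio : Tendsto (fun n : ℕ => rrkap n / (Real.sqrt 2 / (5 : ℝ) ^ ((3 : ℝ) / 4) *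
          ((n : ℝ) + 1 / 5) ^ (-(3 : ℝ) / 4) *
          Real.exp (4 * Real.pi / (5 * Real.sqrt 5) * Real.sqrt ((n : ℝ) + 1 / 5)))) atTop (𝓝 1) := by
  have hinv : Tendsto (fun n : ℕ => (1 / 5 : ℝ) / (n : ℝ)) atTop (𝓝 0) := tendsto_const_div_atTop_nhds_zero_nat _
  have h1 : Tendsto (fun n : ℕ => (1 + (1 / 5 : ℝ) / (n : ℝ)) ^ ((3 : ℝ) / 4)) atTop (𝓝 1) := by
    have h := (hinv.const_add 1).rpow_const (p := (3 : ℝ) / 4) (Or.inl (by norm_num))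
    rwa [add_zero, Real.one_rpow] at h
  have hsq : Tendsto (fun n : ℕ => Real.sqrt (n : ℝ)) atTop atTop :=
    Real.tendsto_sqrt_atTop.comp tendsto_natCast_atTop_atTop
  have h2 : Tendsto (fun n : ℕ => Real.sqrt ((n : ℝ) + 1 / 5) - Real.sqrt n) atTop (𝓝 0) := by
    refine squeeze_zero' (Eventually.of_forall fun n => sub_nonneg.mpr (Real.sqrt_le_sqrt (by linarith))) ?_
      (hsq.const_div_atTop 1)
    filter_upwards [eventually_gt_atTop 0] with n hn
    have hn' : (0:ℝ) < n := by exact_mod_cast hn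
    have hp := Real.sqrt_pos.mpr hn'
    have a := Real.mul_self_sqrt hn'.le
    have b := Real.mul_self_sqrt (show 0 ≤ (n : ℝ) + 1 / 5 by positivity)
    have c := Real.sqrt_nonneg ((n : ℝ) + 1 / 5)
    rw [le_div_iff₀ hp]
    have d : Real.sqrt n ≤ Real.sqrt ((n : ℝ) + 1 / 5) := Real.sqrt_le_sqrt (by linarith)
    nlinarith
  have h3 := (Real.continuous_exp.tendsto _).comp (h2.const_mul (-(4 * Real.pi / (5 * Real.sqrt 5))))
  rw [mul_zero, Real.exp_zero] at h3
  have h4 := h1.mul h3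
  rw [one_mul] at h4
  refine h4.congr' ?_
  filter_upwards [eventually_gt_atTop 0] with n hn
  have hn' : (0:ℝ) < n := by exact_mod_cast hn
  rw [rrkap_eq hn]
  have e1 : (1 + (1 / 5 : ℝ) / (n : ℝ)) = ((n : ℝ) + 1 / 5) / n := by field_simp
  simp only [Function.comp]
  rw [e1, Real.div_rpow (by positivity) hn'.le, show -(3:ℝ) / 4 = -(3 / 4) by ring, Real.rpow_neg hn'.le,
    Real.rpow_neg (by positivity),
    show -(4 * Real.pi / (5 * Real.sqrt 5)) * (Real.sqrt ((n : ℝ) + 1 / 5) - Real.sqrt n) =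
      4 * Real.pi / (5 * Real.sqrt 5) * Real.sqrt n - 4 * Real.pi / (5 * Real.sqrt 5) * Real.sqrt ((n : ℝ) + 1 / 5) by ring,
    Real.exp_sub]
  have p1 : (0:ℝ) < (n : ℝ) ^ ((3:ℝ) / 4) := Real.rpow_pos_of_pos hn' _
  have p2 : (0:ℝ) < ((n : ℝ) + 1 / 5) ^ ((3:ℝ) / 4) := Real.rpow_pos_of_pos (by positivity) _
  have p3 : (0:ℝ) < (5 : ℝ) ^ ((3:ℝ) / 4) := Real.rpow_pos_of_pos (by positivity) _
  have p4 := Real.exp_pos (4 * Real.pi / (5 * Real.sqrt 5) * Real.sqrt ((n : ℝ) + 1 / 5))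
  have p5 : (0:ℝ) < Real.sqrt 2 := by positivity
  generalize (n : ℝ) ^ ((3:ℝ) / 4) = x1 at *
  generalize ((n : ℝ) + 1 / 5) ^ ((3:ℝ) / 4) = x2 at *
  generalize (5 : ℝ) ^ ((3:ℝ) / 4) = x3 at *
  generalize Real.exp (4 * Real.pi / (5 * Real.sqrt 5) * Real.sqrt ((n : ℝ) + 1 / 5)) = x4 at *
  field_simp

lemma rr_first_ratio (hc : ∀ n σ, 0 < σ → Continuous (rrint n σ)) :
    Tendsto (fun n : ℕ => (1 / Real.pi * (∫ φ in (0:ℝ)..Real.pi, rrint n (rrsg n) φ).re) / (rrkap n * rrcos n))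
      atTop (𝓝 1) := by
  have h := rr_L5 hc
  obtain ⟨M, hM⟩ := rrcos_inv
  rw [← tendsto_sub_nhds_zero_iff] at h
  have h2 := h.norm
  rw [norm_zero] at h2
  have h3 := h2.const_mul (M / Real.sqrt Real.pi)
  rw [mul_zero] at h3
  rw [← tendsto_sub_nhds_zero_iff]
  refine squeeze_zero_norm' ?_ h3
  filter_upwards [eventually_gt_atTop 0] with n hn
  set W : ℂ := Complex.exp (-(3 * Real.pi * I / 25)) * Real.sqrt Real.pi with hW
  set J := ∫ φ in (0:ℝ)..Real.pi, rrint n (rrsg n) φ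
  set Z : ℂ := ((Real.sqrt (rrl n) / rrsg n : ℝ) : ℂ) * Complex.exp (-2 * rrl n + 4 * Real.pi / 5 * n * I) * J with hZ
  have hp := Real.pi_pos
  have hsp : 0 < Real.sqrt Real.pi := Real.sqrt_pos.mpr hp
  have hpp := Real.mul_self_sqrt hp.le
  have hs := rrsg_pos hn
  have hl := Real.sqrt_pos.mpr (rrl_pos hn)
  have hJ : J = ((rrkap n * Real.sqrt Real.pi : ℝ) : ℂ) * (Complex.exp (-(4 * Real.pi / 5 * n * I)) * Z) := by
    have e1 : rrkap n * Real.sqrt Real.pi = rrsg n / Real.sqrt (rrl n) * Real.exp (2 * rrl n) := by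
      rw [rrkap]; field_simp
    have e2 : Complex.exp (2 * rrl n) * (Complex.exp (-(4 * Real.pi / 5 * n * I)) *
        Complex.exp (-2 * rrl n + 4 * Real.pi / 5 * n * I)) = 1 := by
      rw [← Complex.exp_add, ← Complex.exp_add, ← Complex.exp_zero]; congr 1; ring
    have hs' : (rrsg n : ℂ) ≠ 0 := by exact_mod_cast hs.ne'
    have hl' : (Real.sqrt (rrl n) : ℂ) ≠ 0 := by exact_mod_cast hl.ne'
    have e3 : (rrsg n : ℂ) / Real.sqrt (rrl n) * (Real.sqrt (rrl n) / rrsg n) = 1 := by field_simp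
    rw [e1, hZ]
    push_cast
    linear_combination (-J) * e2 - J * Complex.exp (2 * rrl n) * (Complex.exp (-(4 * Real.pi / 5 * n * I)) *
        Complex.exp (-2 * rrl n + 4 * Real.pi / 5 * n * I)) * e3
  have hWre : (Complex.exp (-(4 * Real.pi / 5 * n * I)) * W).re = Real.sqrt Real.pi * rrcos n := by
    rw [hW, ← mul_assoc, ← Complex.exp_add, Complex.re_mul_ofReal, mul_comm, rrcos]
    congr 1
    rw [show -(4 * Real.pi / 5 * n * I) + -(3 * Real.pi * I / 25) =
      ((-(4 * Real.pi / 5 * ((n : ℝ) + 3 / 20)) : ℝ) : ℂ) * I by push_cast; ring, Complex.exp_ofReal_mul_I_re,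
      Real.cos_neg]
  have hk := rrkap_pos hn
  have hcn := rrcos_ne n
  have e4 : (1 / Real.pi * J.re) / (rrkap n * rrcos n) - 1 =
      (1 / rrcos n) * (1 / Real.sqrt Real.pi) * (Complex.exp (-(4 * Real.pi / 5 * n * I)) * (Z - W)).re := by
    rw [mul_sub, Complex.sub_re, hWre, hJ, Complex.re_ofReal_mul]
    generalize (Complex.exp (-(4 * Real.pi / 5 * n * I)) * Z).re = y
    have e6 : 1 / Real.pi = (1 / Real.sqrt Real.pi) * (1 / Real.sqrt Real.pi) := by
      rw [div_mul_div_comm, hpp, one_mul]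
    rw [e6]
    field_simp
  rw [e4, norm_mul, norm_mul, Real.norm_eq_abs, Real.norm_of_nonneg (by positivity : 0 ≤ 1 / Real.sqrt Real.pi)]
  have e5 : ‖(Complex.exp (-(4 * Real.pi / 5 * n * I)) * (Z - W)).re‖ ≤ ‖Z - W‖ := by
    refine (Complex.abs_re_le_norm _).trans ?_
    rw [norm_mul, Complex.norm_exp]
    simp
  calc _ ≤ M * (1 / Real.sqrt Real.pi) * ‖Z - W‖ := by
        have hM0 : 0 ≤ M := (abs_nonneg _).trans (hM n)
        gcongr
        exact hM n
    _ = _ := by ring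

theorem rr_coeff_asymptotic (C : ℕ → ℂ)
    (hC : ∀ q : ℂ, ‖q‖ < 1 → HasSum (fun n : ℕ => C n * q ^ n)
      (∏' k : ℕ, ((1 - q ^ (5 * k + 1)) * (1 - q ^ (5 * k + 4))) /
        ((1 - q ^ (5 * k + 2)) * (1 - q ^ (5 * k + 3))))) :
    Tendsto (fun n : ℕ =>
        C n / (((Real.sqrt 2 / (5 : ℝ) ^ ((3 : ℝ) / 4) *
          Real.cos (4 * Real.pi / 5 * ((n : ℝ) + 3 / 20)) *
          ((n : ℝ) + 1 / 5) ^ (-(3 : ℝ) / 4) *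
          Real.exp (4 * Real.pi / (5 * Real.sqrt 5) * Real.sqrt ((n : ℝ) + 1 / 5)) : ℝ) : ℂ)))
      atTop (nhds 1) ∧
    ∃ N₀ : ℕ, ∀ n ≥ N₀,
      ((n % 5 = 0 ∨ n % 5 = 2) → (C n).im = 0 ∧ 0 < (C n).re) ∧
      ((n % 5 = 1 ∨ n % 5 = 3 ∨ n % 5 = 4) → (C n).im = 0 ∧ (C n).re < 0) := by
  have hC' : ∀ q : ℂ, ‖q‖ < 1 → HasSum (fun n : ℕ => C n * q ^ n) (Complex.exp (rrG q)) := by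
    intro q hq
    rw [← (rr_prod q hq).1]
    exact hC q hq
  have hc : ∀ n σ, 0 < σ → Continuous (rrint n σ) := fun n σ hσ => (rr_coeff C hC' n σ hσ).1
  set c : ℕ → ℝ := fun n => 1 / Real.pi * (∫ φ in (0:ℝ)..Real.pi, rrint n (rrsg n) φ).re with hcd
  have hCc : ∀ n : ℕ, 0 < n → C n = ((c n : ℝ) : ℂ) := fun n hn => (rr_coeff C hC' n _ (rrsg_pos hn)).2
  have h1 : Tendsto (fun n => c n / (rrkap n * rrcos n)) atTop (𝓝 1) := rr_first_ratio hc
  constructor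
  · have h2 := h1.mul rrkap_ratio
    rw [one_mul] at h2
    have h3 := (Complex.continuous_ofReal.tendsto 1).comp h2
    rw [Complex.ofReal_one] at h3
    refine h3.congr' ?_
    filter_upwards [eventually_gt_atTop 0] with n hn
    rw [hCc n hn, ← Complex.ofReal_div]
    simp only [Function.comp]
    congr 1
    have hk := (rrkap_pos hn).ne'
    have hr := rrcos_ne n
    rw [← rrcos]
    rw [div_mul_div_comm, mul_comm (c n), mul_assoc (rrkap n), mul_div_mul_left _ _ hk]
    congr 1
    ring
  · have h4 : ∀ᶠ n : ℕ in atTop, 0 < c n / (rrkap n * rrcos n) := h1.eventually (lt_mem_nhds one_pos)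
    obtain ⟨N, hN⟩ := (h4.and (eventually_gt_atTop 0)).exists_forall_of_atTop
    refine ⟨N, fun n hn => ?_⟩
    obtain ⟨h5, h6⟩ := hN n hn
    have hk := rrkap_pos h6
    rw [hCc n h6, Complex.ofReal_im, Complex.ofReal_re]
    refine ⟨fun h => ⟨rfl, ?_⟩, fun h => ⟨rfl, ?_⟩⟩
    · exact (div_pos_iff_of_pos_right (mul_pos hk (rrcos_pos h))).mp h5
    · have h7 : rrkap n * rrcos n < 0 := mul_neg_of_pos_of_neg hk (rrcos_neg h)
      rcases div_pos_iff.mp h5 with h8 | h8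
      · linarith [h8.2]
      · exact h8.1
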